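/- arXiv:1601.08177 — 2 statements merged into one kernel-verified Lean document; each statement's English description precedes it below -/
import Mathlib

section
/- Assume P̃^l_{ijk}α_l = P^l_{ijk}α_l at every (x,y) ∈ U × (ℝ^n \ {0}), fix p ∈ U with dα ≠ 0 at p, and assume that at every nonzero y over p with η ≠ 0 one has X^sX^l_s = θ·η^l for all l, where θ = (X^l_sX^sα_l)/η. Then at every nonzero y over p with η ≠ 0, writing E_i = ∂E/∂y^i: g*_{ij}(p) = ( X^lα_l − θ(y^mα_m)/2 ) g_{ij} + θ·((y^mα_m)/(4E))·( ((y^mα_m)/(2η))·(θ − (y^mα_m)/E) − 1 )·E_i E_j + θ·(E/(2η))·(θ − (y^mα_m)/E)·α_i α_j + (θ/2)·( 1 + (y^mα_m)²/(2Eη) − θ(y^mα_m)/(2η) )·(α_i E_j + α_j E_i). In particular the matrix g*_{ij}(p) lies in the linear span of g_{ij}, E_iE_j, α_iα_j and α_iE_j + α_jE_i at each such point. -/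
/-!
Everything takes place on the tangent space at `p`, where `f = E(p, ·)` and `a = dα` is a constant
covector. Write `β = a(y)`, `A = X^l a_l = g^{lm} a_l a_m` and `ξ = a - (β / 2E) dE`, which is `η^l`
lowered with `g`. By hypothesis `E A` is the quadratic form of `gs`, so

  `gs = A g + dE ⊗ dA + dA ⊗ dE + E Hess A`.

Lowering `W^l = X^s X^l_s` with `g` gives `dA` (`metric_accel`), so the dependence hypothesis reads
`dA = θ ξ` where `η ≠ 0`. Differentiating this proportionality and using the symmetry of `Hess A`
determines `gs` up to one scalar `κ`:

  `gs = (A - θβ/2) g + E κ ξ ⊗ ξ + (θ/2) (ξ ⊗ dE + dE ⊗ ξ) + (θβ/4E) dE ⊗ dE`.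

The scalar comes from a global argument (`exists_unit_gradient`). Cauchy–Schwarz for `g` gives
`β² ≤ 2 E A = gs(y, y)`, with equality in a direction where `β² / E` is maximal. So
`gs - a ⊗ a` is positive semidefinite with a null vector outside the kernel of `a`, and hence there
is `v` with `gs v = a` and `a(v) = 1`. Pairing `gs v = a` with `y` and with `X` yields
`E κ η = E θ² / 2 - θ β / 2` (`pointwise_formula`), and expanding `ξ` gives the formula.
-/

/- Common framework: Finsler energies in local coordinates, following the paper's
   notation.  `x` is the base point, `y` the fiber (direction) variable. -/

noncomputable section
open scoped BigOperators

namespace FinslerConformal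

/-- Vectors in local coordinates. -/
abbrev Vec (n : ℕ) := Fin n → ℝ

/-- Functions on `U × ℝⁿ`, written with separate base and fiber variables. -/
abbrev Fn (n : ℕ) := Vec n → Vec n → ℝ

variable {n : ℕ}

/-- Partial derivative in the fiber variable `y`, in direction `i`. -/
def pdy (i : Fin n) (f : Fn n) : Fn n :=
  fun x y => fderiv ℝ (f x) y (Pi.single i 1)

/-- Partial derivative in the base variable `x`, in direction `i`. -/
def pdx (i : Fin n) (f : Fn n) : Fn n :=
  fun x y => fderiv ℝ (fun x' => f x' y) x (Pi.single i 1)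

/-- Partial derivative `α_i = ∂α/∂x^i` of a function of the position only. -/
def pda (α : Vec n → ℝ) (i : Fin n) (x : Vec n) : ℝ :=
  fderiv ℝ α x (Pi.single i 1)

/-- Riemann–Finsler metric `g_{ij} = ∂²E/∂y^i∂y^j`. -/
def gdown (E : Fn n) (i j : Fin n) : Fn n := pdy i (pdy j E)

/-- The Riemann–Finsler metric as a matrix. -/
def gmat (E : Fn n) (x y : Vec n) : Matrix (Fin n) (Fin n) ℝ :=
  Matrix.of fun i j => gdown E i j x y

/-- Inverse metric `g^{ij}`. -/
def gup (E : Fn n) (i j : Fin n) : Fn n := fun x y => (gmat E x y)⁻¹ i j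

/-- First Cartan tensor `C_{ijk} = ∂g_{ij}/∂y^k`. -/
def cartanDown (E : Fn n) (i j k : Fin n) : Fn n := pdy k (gdown E i j)

/-- `C^l_{ij} = g^{lk} C_{ijk}`. -/
def cartanUp (E : Fn n) (l i j : Fin n) : Fn n :=
  fun x y => ∑ k, gup E l k x y * cartanDown E i j k x y

/-- Geodesic spray coefficients
`G^l = ½ g^{lm}(y^k ∂²E/∂y^m∂x^k − ∂E/∂x^m)`. -/
def spray (E : Fn n) (l : Fin n) : Fn n :=
  fun x y => (1/2) * ∑ m, gup E l m x y *
    ((∑ k, y k * pdy m (pdx k E) x y) - pdx m E x y)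

/-- `G^l_i = ∂G^l/∂y^i`. -/
def sprayD1 (E : Fn n) (l i : Fin n) : Fn n := pdy i (spray E l)

/-- `G^l_{ij} = ∂G^l_i/∂y^j`. -/
def sprayD2 (E : Fn n) (l i j : Fin n) : Fn n := pdy j (sprayD1 E l i)

/-- `G^l_{ijk} = ∂G^l_{ij}/∂y^k`. -/
def sprayD3 (E : Fn n) (l i j k : Fin n) : Fn n := pdy k (sprayD2 E l i j)

/-- Mixed curvature of the Berwald connection `P^l_{ijk} = −G^l_{ijk}`. -/
def mixedCurv (E : Fn n) (l i j k : Fin n) : Fn n :=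
  fun x y => - sprayD3 E l i j k x y

/-- Landsberg tensor
`P^l_{ij} = ½ g^{lm}(∂g_{jm}/∂x^i − 2G^k_i C_{jkm} − G^k_{ij} g_{km} − G^k_{im} g_{jk})`. -/
def landsberg (E : Fn n) (l i j : Fin n) : Fn n :=
  fun x y => (1/2) * ∑ m, gup E l m x y *
    (pdx i (gdown E j m) x y
      - 2 * ∑ k, sprayD1 E k i x y * cartanDown E j k m x y
      - ∑ k, sprayD2 E k i j x y * gdown E k m x y
      - ∑ k, sprayD2 E k i m x y * gdown E j k x y)

/-- A Finsler energy on an open set `U ⊆ ℝⁿ`: `C^∞` on `U × (ℝⁿ \ {0})`,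
positively 2-homogeneous in `y`, with positive definite fiberwise Hessian. -/
structure IsFinslerEnergy (U : Set (Vec n)) (E : Fn n) : Prop where
  smooth : ContDiffOn ℝ (⊤ : ℕ∞) (fun p : Vec n × Vec n => E p.1 p.2) (U ×ˢ {y : Vec n | y ≠ 0})
  homog : ∀ x ∈ U, ∀ y : Vec n, y ≠ 0 → ∀ t : ℝ, 0 < t → E x (t • y) = t ^ 2 * E x y
  posdef : ∀ x ∈ U, ∀ y : Vec n, y ≠ 0 → (gmat E x y).PosDef

/-- Conformal change of the energy: `Ẽ = e^{2α} E`. -/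
def confE (E : Fn n) (α : Vec n → ℝ) : Fn n :=
  fun x y => Real.exp (2 * α x) * E x y

/-- `X^l = g^{lm} α_m`. -/
def Xup (E : Fn n) (α : Vec n → ℝ) (l : Fin n) : Fn n :=
  fun x y => ∑ m, gup E l m x y * pda α m x

/-- `X^l_i = ∂X^l/∂y^i`. -/
def XupD (E : Fn n) (α : Vec n → ℝ) (l i : Fin n) : Fn n := pdy i (Xup E α l)

/-- `X^l_{ij} = ∂²X^l/∂y^i∂y^j`. -/
def XupD2 (E : Fn n) (α : Vec n → ℝ) (l i j : Fin n) : Fn n := pdy j (XupD E α l i)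

/-- Difference tensor of the mixed Berwald curvatures `B^l_{ijk} = G̃^l_{ijk} − G^l_{ijk}`. -/
def Bdiff (E : Fn n) (α : Vec n → ℝ) (l i j k : Fin n) : Fn n :=
  fun x y => sprayD3 (confE E α) l i j k x y - sprayD3 E l i j k x y

/-- vv-curvature of the Cartan connection `Q^l_{ijk} = C^l_{jm}C^m_{ik} − C^l_{im}C^m_{jk}`. -/
def QUp (E : Fn n) (l i j k : Fin n) : Fn n :=
  fun x y => ∑ m, (cartanUp E l j m x y * cartanUp E m i k x y
    - cartanUp E l i m x y * cartanUp E m j k x y)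

/-- Lowered vv-curvature `Q_{pijk} = g_{pl} Q^l_{ijk}`. -/
def QDown (E : Fn n) (p i j k : Fin n) : Fn n :=
  fun x y => ∑ l, gdown E p l x y * QUp E l i j k x y

/-- `y^m α_m`. -/
def yalpha (α : Vec n → ℝ) : Fn n := fun x y => ∑ m, y m * pda α m x

/-- `X^l α_l`, the Riemann–Finsler norm square of the gradient `X`. -/
def Xalpha (E : Fn n) (α : Vec n → ℝ) : Fn n :=
  fun x y => ∑ l, Xup E α l x y * pda α l x

/-- Components of the projected vector field `η^l = X^l − ((y^mα_m)/(2E)) y^l`. -/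
def etaUp (E : Fn n) (α : Vec n → ℝ) (l : Fin n) : Fn n :=
  fun x y => Xup E α l x y - (yalpha α x y / (2 * E x y)) * y l

/-- `η = η^l α_l = X^lα_l − (y^mα_m)²/(2E)`. -/
def etaSc (E : Fn n) (α : Vec n → ℝ) : Fn n :=
  fun x y => ∑ l, etaUp E α l x y * pda α l x

/-- `W^l = X^s X^l_s`. -/
def Wup (E : Fn n) (α : Vec n → ℝ) (l : Fin n) : Fn n :=
  fun x y => ∑ s, Xup E α s x y * XupD E α l s x y

/-- The associated Riemannian energy `E_* = E · X^lα_l = E · g^{lm}α_lα_m`. -/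
def Estar (E : Fn n) (α : Vec n → ℝ) : Fn n :=
  fun x y => E x y * Xalpha E α x y

/-- Riemannian gradient `X_*^l = g_*^{lk} α_k`, with respect to a Hessian matrix `gs`. -/
def Xstar (α : Vec n → ℝ) (gs : Matrix (Fin n) (Fin n) ℝ) (p : Vec n) : Vec n :=
  fun l => ∑ k, gs⁻¹ l k * pda α k p

/-- `b² = g_*^{kl} α_k α_l`. -/
def bsq (α : Vec n → ℝ) (gs : Matrix (Fin n) (Fin n) ℝ) (p : Vec n) : ℝ :=
  ∑ k, ∑ l, gs⁻¹ k l * pda α k p * pda α l p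

/-- The paper's Gram expression
`X^i_m X^m X^s_i α_s · ( X^lα_l − (y^mα_m)²/(2E) ) − ( X^k X^j_k α_j )²`. -/
def gramEtaW (E : Fn n) (α : Vec n → ℝ) : Fn n :=
  fun x y =>
    (∑ i, Wup E α i x y * ∑ s, XupD E α s i x y * pda α s x) *
      (Xalpha E α x y - (yalpha α x y) ^ 2 / (2 * E x y))
    - (∑ k, ∑ j, Xup E α k x y * XupD E α j k x y * pda α j x) ^ 2

/-- The curvature contraction `X^j X^s_j X^a X^c X^i_m X^m Q_{aisc}`. -/
def Qcon (E : Fn n) (α : Vec n → ℝ) : Fn n :=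
  fun x y => ∑ j, ∑ s, ∑ a, ∑ c, ∑ i,
    Xup E α j x y * XupD E α s j x y * Xup E α a x y * Xup E α c x y *
      Wup E α i x y * QDown E a i s c x y

/-- `θ = (X^l_s X^s α_l)/η`. -/
def thetaFn (E : Fn n) (α : Vec n → ℝ) : Fn n :=
  fun x y => (∑ l, Wup E α l x y * pda α l x) / etaSc E α x y

end FinslerConformal

namespace FinslerConformal

/-! ### Calculus of coordinate derivatives away from the origin -/

/-- Directional derivative along the `i`-th coordinate on a single tangent space: `pdy i F x` is
definitionally `dd i (F x)`. -/
def dd {n : ℕ} (i : Fin n) (h : Vec n → ℝ) (y : Vec n) : ℝ := fderiv ℝ h y (Pi.single i 1)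

/-- Smoothness away from the origin. The value at `0` is unconstrained, so identities between such
functions are always used on the open set `y ≠ 0` only. -/
def SmoothOff {n : ℕ} (h : Vec n → ℝ) : Prop := ∀ y : Vec n, y ≠ 0 → ContDiffAt ℝ (⊤ : ℕ∞) h y

section calculus
variable {n : ℕ} {h k : Vec n → ℝ} {y : Vec n}

lemma SmoothOff.diff (hh : SmoothOff h) (hy : y ≠ 0) : DifferentiableAt ℝ h y :=
  (hh y hy).differentiableAt (by simp)

lemma eventually_off (hy : y ≠ 0) {P : Vec n → Prop} (hP : ∀ z, z ≠ 0 → P z) :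
    ∀ᶠ z in nhds y, P z :=
  (isOpen_ne.mem_nhds hy : {z : Vec n | z ≠ 0} ∈ nhds y) |> fun hm =>
    Filter.mem_of_superset hm fun z hz => hP z hz

lemma SmoothOff.dd (hh : SmoothOff h) (i : Fin n) : SmoothOff (dd i h) := by
  intro y hy
  have h1 : ContDiffAt ℝ (⊤ : ℕ∞) (fderiv ℝ h) y :=
    (hh y hy).fderiv_right (m := (⊤ : ℕ∞)) (by simp)
  exact h1.clm_apply contDiffAt_const

lemma SmoothOff.congr (hh : SmoothOff h) (e : ∀ z, z ≠ 0 → k z = h z) : SmoothOff k :=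
  fun y hy => (hh y hy).congr_of_eventuallyEq (eventually_off hy e)

lemma dd_congr (e : h =ᶠ[nhds y] k) (i : Fin n) : dd i h y = dd i k y := by
  unfold dd; rw [e.fderiv_eq]

lemma dd_congr_off (hy : y ≠ 0) (e : ∀ z, z ≠ 0 → h z = k z) (i : Fin n) :
    dd i h y = dd i k y := dd_congr (eventually_off hy e) i

lemma dd_mul (hh : DifferentiableAt ℝ h y) (hk : DifferentiableAt ℝ k y) (i : Fin n) :
    dd i (fun z => h z * k z) y = h y * dd i k y + k y * dd i h y := by
  unfold dd; rw [fderiv_fun_mul hh hk]; simp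

lemma dd_add (hh : DifferentiableAt ℝ h y) (hk : DifferentiableAt ℝ k y) (i : Fin n) :
    dd i (fun z => h z + k z) y = dd i h y + dd i k y := by
  unfold dd; rw [fderiv_fun_add hh hk]; simp

lemma dd_sum {ι : Type*} (s : Finset ι) (F : ι → Vec n → ℝ)
    (hF : ∀ a ∈ s, DifferentiableAt ℝ (F a) y) (i : Fin n) :
    dd i (fun z => ∑ a ∈ s, F a z) y = ∑ a ∈ s, dd i (F a) y := by
  unfold dd; rw [fderiv_fun_sum hF]; simp

lemma dd_const (c : ℝ) (i : Fin n) : dd i (fun _ => c) y = 0 := by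
  unfold dd; simp

lemma dd_coord (i k : Fin n) : dd i (fun z : Vec n => z k) y = if k = i then 1 else 0 := by
  have : fderiv ℝ (fun z : Vec n => z k) y = ContinuousLinearMap.proj k :=
    (ContinuousLinearMap.proj (R := ℝ) (φ := fun _ : Fin n => ℝ) k).hasFDerivAt.fderiv
  unfold dd; rw [this]; simp [Pi.single_apply]

lemma dd_linear (c : Vec n) (i : Fin n) : dd i (fun z : Vec n => ∑ m, z m * c m) y = c i := by
  rw [dd_sum _ _ (fun a _ => by fun_prop)]
  simp [dd_mul, dd_const, dd_coord, differentiableAt_apply]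

lemma fderiv_eq_sum (v : Vec n) : fderiv ℝ h y v = ∑ i, v i * dd i h y := by
  conv_lhs => rw [pi_eq_sum_univ' v]
  simp [map_sum, dd]

lemma dd_comm (hh : SmoothOff h) (hy : y ≠ 0) (i j : Fin n) :
    dd i (dd j h) y = dd j (dd i h) y := by
  have hs : IsSymmSndFDerivAt ℝ h y := (hh y hy).isSymmSndFDerivAt (by
    simpa using WithTop.coe_le_coe.mpr (le_top : (2 : ℕ∞) ≤ ⊤))
  have hd : DifferentiableAt ℝ (fderiv ℝ h) y :=
    ((hh y hy).fderiv_right (m := (⊤ : ℕ∞)) (by simp)).differentiableAt (by simp)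
  have key : ∀ i j : Fin n, dd i (dd j h) y =
      fderiv ℝ (fderiv ℝ h) y (Pi.single i 1) (Pi.single j 1) := by
    intro i j
    show fderiv ℝ (fun z => fderiv ℝ h z (Pi.single j 1)) y (Pi.single i 1) = _
    rw [fderiv_clm_apply hd (differentiableAt_const _)]
    simp
  rw [key, key]; exact hs _ _

end calculus

/-- The entries of an inverse matrix are differentiable, by Cramer's rule. -/
lemma differentiableAt_matrix_inv {n : ℕ} {M : Vec n → Matrix (Fin n) (Fin n) ℝ} {y : Vec n}
    (hM : ∀ i j, DifferentiableAt ℝ (fun z => M z i j) y) (hdet : (M y).det ≠ 0) (i j : Fin n) :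
    DifferentiableAt ℝ (fun z => (M z)⁻¹ i j) y := by
  have hd : ∀ N : Vec n → Matrix (Fin n) (Fin n) ℝ,
      (∀ i j, DifferentiableAt ℝ (fun z => N z i j) y) →
      DifferentiableAt ℝ (fun z => (N z).det) y := by
    intro N hN
    simp only [Matrix.det_apply]
    refine DifferentiableAt.fun_sum fun σ _ => ?_
    exact (HasFDerivAt.finsetProd (g := fun k z => N z (σ k) k)
      fun k _ => (hN (σ k) k).hasFDerivAt).differentiableAt.const_smul _
  simp only [Matrix.inv_def, Matrix.smul_apply, smul_eq_mul, Ring.inverse_eq_inv',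
    Matrix.adjugate_apply]
  refine ((hd M hM).inv hdet).mul (hd _ fun k l => ?_)
  by_cases hk : k = j
  · subst hk; simp
  · simpa [Matrix.updateRow_ne hk] using hM k l

/-! ### Consequences of homogeneity and positivity -/

section energy
variable {n : ℕ} {f : Vec n → ℝ} {y : Vec n}

lemma euler_energy (hf : SmoothOff f)
    (hom : ∀ z : Vec n, z ≠ 0 → ∀ t : ℝ, 0 < t → f (t • z) = t ^ 2 * f z) (hy : y ≠ 0) :
    ∑ i, y i * dd i f y = 2 * f y := by
  rw [← fderiv_eq_sum]
  have h1 : HasDerivAt (fun t : ℝ => t • y) y 1 := by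
    simpa using (hasDerivAt_id (1 : ℝ)).smul_const y
  have h2 : HasFDerivAt f (fderiv ℝ f y) ((1 : ℝ) • y) := by
    rw [one_smul]; exact (hf.diff hy).hasFDerivAt
  have h3 : HasDerivAt (fun t : ℝ => f (t • y)) (fderiv ℝ f y y) 1 :=
    h2.comp_hasDerivAt (1 : ℝ) h1
  have h4 : HasDerivAt (fun t : ℝ => t ^ 2 * f y) (2 * f y) 1 := by
    simpa using (hasDerivAt_pow 2 (1 : ℝ)).mul_const (f y)
  refine h3.unique (h4.congr_of_eventuallyEq ?_)
  filter_upwards [lt_mem_nhds (zero_lt_one : (0 : ℝ) < 1)] with t ht using hom y hy t ht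

lemma euler_metric (hf : SmoothOff f)
    (hom : ∀ z : Vec n, z ≠ 0 → ∀ t : ℝ, 0 < t → f (t • z) = t ^ 2 * f z) (hy : y ≠ 0)
    (i : Fin n) : ∑ j, dd i (dd j f) y * y j = dd i f y := by
  have h1 := dd_congr_off hy (fun z hz => euler_energy hf hom hz) i
  rw [dd_sum _ (fun j z => z j * dd j f z)
      (fun j _ => (differentiableAt_apply j y).fun_mul ((hf.dd j).diff hy)),
    dd_mul (differentiableAt_const _) (hf.diff hy), dd_const] at h1
  simp only [dd_mul (differentiableAt_apply _ y) ((hf.dd _).diff hy), dd_coord,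
    Finset.sum_add_distrib] at h1
  simp only [mul_ite, mul_one, mul_zero, Finset.sum_ite_eq', Finset.mem_univ, if_true] at h1
  simp only [mul_comm _ (y _)]
  linarith

lemma posdef_sum {M : Matrix (Fin n) (Fin n) ℝ} (hM : M.PosDef) {v : Vec n} (hv : v ≠ 0) :
    0 < ∑ i, (∑ j, M i j * v j) * v i := by
  have := hM.dotProduct_mulVec_pos hv
  simp only [dotProduct, Matrix.mulVec, star_trivial] at this
  simpa [mul_comm] using this

lemma energy_pos (hf : SmoothOff f)
    (hom : ∀ z : Vec n, z ≠ 0 → ∀ t : ℝ, 0 < t → f (t • z) = t ^ 2 * f z)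
    (hpd : ∀ z : Vec n, z ≠ 0 → (Matrix.of fun i j => dd i (dd j f) z).PosDef) (hy : y ≠ 0) :
    0 < f y := by
  have h := posdef_sum (hpd y hy) hy
  simp only [Matrix.of_apply, euler_metric hf hom hy] at h
  simp only [mul_comm _ (y _), euler_energy hf hom hy] at h
  linarith

variable {a : Vec n} {X : Fin n → Vec n → ℝ}

/-- The acceleration `W = X^s ∂_s X`, lowered with `g`, is the differential of the squared norm
`X^l a_l` of the gradient: both equal `-C_{kls} X^l X^s`, as seen by differentiating `g X = a` and
using the total symmetry of the Cartan tensor. -/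
lemma metric_accel (hf : SmoothOff f) (hX : ∀ l, ∀ z : Vec n, z ≠ 0 → DifferentiableAt ℝ (X l) z)
    (hgX : ∀ z : Vec n, z ≠ 0 → ∀ i, ∑ j, dd i (dd j f) z * X j z = a i) (hy : y ≠ 0)
    (k : Fin n) :
    ∑ l, dd k (dd l f) y * (∑ s, X s y * dd s (X l) y) = dd k (fun z => ∑ l, X l z * a l) y := by
  have h1 : ∀ s k, ∑ l, dd k (dd l f) y * dd s (X l) y
      = - ∑ l, X l y * dd s (dd k (dd l f)) y := by
    intro s k
    have h := dd_congr_off hy (fun z hz => hgX z hz k) s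
    rw [dd_const, dd_sum _ (fun l z => dd k (dd l f) z * X l z)
      (fun l _ => (((hf.dd l).dd k).diff hy).fun_mul (hX l y hy))] at h
    simp only [dd_mul (((hf.dd _).dd k).diff hy) (hX _ y hy), Finset.sum_add_distrib] at h
    linarith
  have h2 : dd k (fun z => ∑ l, X l z * a l) y = ∑ l, a l * dd k (X l) y := by
    rw [dd_sum _ _ (fun l _ => (hX l y hy).mul_const _)]
    exact Finset.sum_congr rfl fun l _ => by
      rw [dd_mul (hX l y hy) (differentiableAt_const _), dd_const]; ring
  have h3 : ∑ l, a l * dd k (X l) y = ∑ s, X s y * ∑ l, dd s (dd l f) y * dd k (X l) y := by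
    simp only [← hgX y hy, Finset.sum_mul, Finset.mul_sum]
    rw [Finset.sum_comm]
    exact Finset.sum_congr rfl fun s _ => Finset.sum_congr rfl fun l _ => by
      rw [dd_comm hf hy l s]; ring
  have h4 : ∑ l, dd k (dd l f) y * (∑ s, X s y * dd s (X l) y)
      = ∑ s, X s y * ∑ l, dd k (dd l f) y * dd s (X l) y := by
    simp only [Finset.mul_sum]
    rw [Finset.sum_comm]
    exact Finset.sum_congr rfl fun s _ => Finset.sum_congr rfl fun l _ => by ring
  rw [h2, h3, h4]
  simp only [h1]
  exact Finset.sum_congr rfl fun s _ => by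
    simp only [dd_comm (hf.dd _) hy s k]

/-- Cauchy–Schwarz for `y` and `X` with respect to `g_y`, obtained from `g_y(w, w) ≥ 0` for
`w = X - (β / 2E) y`. -/
lemma norm_sub_proj (hf : SmoothOff f)
    (hom : ∀ z : Vec n, z ≠ 0 → ∀ t : ℝ, 0 < t → f (t • z) = t ^ 2 * f z)
    (hpd : ∀ z : Vec n, z ≠ 0 → (Matrix.of fun i j => dd i (dd j f) z).PosDef)
    (hgX : ∀ z : Vec n, z ≠ 0 → ∀ i, ∑ j, dd i (dd j f) z * X j z = a i) (hy : y ≠ 0) :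
    ∑ i, dd i f y * X i y = ∑ i, a i * y i ∧
    (∑ i, y i * a i) ^ 2 ≤ 2 * (f y * ∑ l, X l y * a l) := by
  have hpos := energy_pos hf hom hpd hy
  have heX : ∑ i, dd i f y * X i y = ∑ i, a i * y i := by
    simp only [← euler_metric hf hom hy, ← hgX y hy, Finset.sum_mul]
    rw [Finset.sum_comm]
    exact Finset.sum_congr rfl fun s _ => Finset.sum_congr rfl fun l _ => by
      rw [dd_comm hf hy l s]; ring
  refine ⟨heX, ?_⟩
  set β := ∑ i, y i * a i with hβ
  have hβ' : ∑ i, a i * y i = β := by simp only [mul_comm, hβ]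
  set c := β / (2 * f y) with hc
  have h0 : 0 ≤ ∑ i, (∑ j, dd i (dd j f) y * (X j y - c * y j)) * (X i y - c * y i) := by
    by_cases hv : (fun j => X j y - c * y j) = 0
    · have : ∀ i, X i y - c * y i = 0 := fun i => congrFun hv i
      simp [this]
    · exact (posdef_sum (hpd y hy) hv).le
  have h1 : ∀ i, ∑ j, dd i (dd j f) y * (X j y - c * y j) = a i - c * dd i f y := by
    intro i
    rw [← hgX y hy i, ← euler_metric hf hom hy i, Finset.mul_sum, ← Finset.sum_sub_distrib]
    exact Finset.sum_congr rfl fun s _ => by ring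
  have h2 : ∑ i, (a i - c * dd i f y) * (X i y - c * y i) =
      ∑ i, X i y * a i - c * ∑ i, a i * y i - c * ∑ i, dd i f y * X i y
        + c ^ 2 * ∑ i, y i * dd i f y := by
    simp only [Finset.mul_sum, ← Finset.sum_sub_distrib, ← Finset.sum_add_distrib]
    exact Finset.sum_congr rfl fun s _ => by ring
  simp only [h1] at h0
  rw [h2, heX, hβ', euler_energy hf hom hy] at h0
  have h3 : 2 * f y * (∑ i, X i y * a i - c * β - c * β + c ^ 2 * (2 * f y))
      = 2 * (f y * ∑ l, X l y * a l) - β ^ 2 := by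
    rw [hc]; field_simp; ring
  have := mul_nonneg (by linarith : (0:ℝ) ≤ 2 * f y) h0
  linarith

/-- A maximum point of `β² / f` on the unit sphere (of the sup norm, which is immaterial by
homogeneity): there `df` is proportional to `a`. -/
lemma exists_critical (hf : SmoothOff f)
    (hom : ∀ z : Vec n, z ≠ 0 → ∀ t : ℝ, 0 < t → f (t • z) = t ^ 2 * f z)
    (hpos : ∀ z : Vec n, z ≠ 0 → 0 < f z) (ha : a ≠ 0) :
    ∃ y : Vec n, y ≠ 0 ∧ ∑ m, y m * a m ≠ 0 ∧
      ∀ i, (∑ m, y m * a m) * dd i f y = 2 * f y * a i := by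
  set β : Vec n → ℝ := fun z => ∑ m, z m * a m with hβ
  have hβd : ∀ z, DifferentiableAt ℝ β z := fun z => by fun_prop
  have hβs : ∀ (t : ℝ) z, β (t • z) = t * β z := by
    intro t z; simp [hβ, Finset.mul_sum, mul_assoc]
  set ψ : Vec n → ℝ := fun z => β z * β z / f z with hψ
  have hψd : ∀ z, z ≠ 0 → DifferentiableAt ℝ ψ z := by
    intro z hz
    have h1 := hf.diff hz
    have h2 := hβd z
    have h3 := (hpos z hz).ne'
    fun_prop (disch := assumption)
  obtain ⟨i₀, hi₀⟩ : ∃ i, a i ≠ 0 := by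
    by_contra! h; exact ha (funext h)
  have hne : ∀ z ∈ Metric.sphere (0 : Vec n) 1, z ≠ 0 := by
    rintro z hz rfl; simp at hz
  have hnorm : ∀ z : Vec n, z ≠ 0 → ‖z‖⁻¹ • z ∈ Metric.sphere (0 : Vec n) 1 := by
    intro z hz; simp [norm_smul, hz]
  have hψs : ∀ z : Vec n, z ≠ 0 → ψ (‖z‖⁻¹ • z) = ψ z := by
    intro z hz
    have hn : 0 < ‖z‖⁻¹ := inv_pos.mpr (norm_pos_iff.mpr hz)
    have := (hpos z hz).ne'
    simp only [hψ, hβs, hom z hz _ hn]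
    field_simp
  have hs : (Pi.single i₀ 1 : Vec n) ≠ 0 := by simp
  obtain ⟨y, hyS, hmax⟩ := (isCompact_sphere (0 : Vec n) 1).exists_isMaxOn
    ⟨_, hnorm _ hs⟩ (f := ψ) (fun z hz => (hψd z (hne z hz)).continuousAt.continuousWithinAt)
  have hy := hne y hyS
  have hmax' : ∀ z, z ≠ 0 → ψ z ≤ ψ y := fun z hz => hψs z hz ▸ hmax (hnorm z hz)
  have hβy : β y ≠ 0 := by
    intro h0
    have h1 := hmax' _ hs
    have h2 : β (Pi.single i₀ 1) = a i₀ := by simp [hβ, Pi.single_apply]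
    have h3 : 0 < ψ (Pi.single i₀ 1) := by
      simp only [hψ, h2]; exact div_pos (mul_self_pos.mpr hi₀) (hpos _ hs)
    simp only [hψ, h0] at h1 h3
    simp at h1
    linarith
  refine ⟨y, hy, hβy, fun i => ?_⟩
  have hcrit : dd i ψ y = 0 := by
    have : IsLocalMax ψ y := eventually_off hy hmax'
    simp [dd, this.fderiv_eq_zero]
  have hprod := dd_congr_off hy (h := fun z => f z * ψ z) (k := fun z => β z * β z)
    (fun z hz => by have := (hpos z hz).ne'; simp only [hψ]; field_simp) i
  rw [dd_mul (hf.diff hy) (hψd y hy), dd_mul (hβd y) (hβd y), hcrit, hβ, dd_linear] at hprod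
  have hfy := (hpos y hy).ne'
  have h5 : β y * β y * dd i f y = 2 * f y * β y * a i := by
    have : ψ y * f y = β y * β y := by simp only [hψ]; field_simp
    rw [← this]
    linear_combination f y * hprod
  apply mul_left_cancel₀ hβy
  linear_combination h5

/-- The Riemannian gradient of `a` has unit length. By Cauchy–Schwarz `gs - a ⊗ a` is positive
semidefinite, and it vanishes on the direction `y` where `β² / f` is maximal; hence `gs y = β a`, and
`v = y / β` satisfies `gs v = a` and `a v = 1`. -/
lemma exists_unit_gradient (hf : SmoothOff f)
    (hom : ∀ z : Vec n, z ≠ 0 → ∀ t : ℝ, 0 < t → f (t • z) = t ^ 2 * f z)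
    (hpd : ∀ z : Vec n, z ≠ 0 → (Matrix.of fun i j => dd i (dd j f) z).PosDef)
    (hgX : ∀ z : Vec n, z ≠ 0 → ∀ i, ∑ j, dd i (dd j f) z * X j z = a i) (ha : a ≠ 0)
    {gs : Matrix (Fin n) (Fin n) ℝ} (hsym : gs.IsSymm)
    (hquad : ∀ z : Vec n, z ≠ 0 →
      f z * ∑ l, X l z * a l = (1/2) * ∑ i, ∑ j, gs i j * z i * z j) :
    ∃ v : Vec n, (∀ i, ∑ j, gs i j * v j = a i) ∧ ∑ i, a i * v i = 1 := by
  obtain ⟨y, hy, hβ, hcrit⟩ :=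
    exists_critical hf hom (fun z hz => energy_pos hf hom hpd hz) ha
  have hfy := energy_pos hf hom hpd hy
  set b := ∑ m, y m * a m with hb
  have hb' : ∑ m, a m * y m = b := by simp only [hb, mul_comm]
  set Q : Matrix (Fin n) (Fin n) ℝ := gs - Matrix.vecMulVec a a with hQ
  have hQv : ∀ z : Vec n, z ⬝ᵥ (Q.mulVec z) =
      (∑ i, ∑ j, gs i j * z i * z j) - (∑ m, z m * a m) ^ 2 := by
    intro z
    have e1 : z ⬝ᵥ (gs.mulVec z) = ∑ i, ∑ j, gs i j * z i * z j := by
      simp only [dotProduct, Matrix.mulVec, Finset.mul_sum]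
      exact Finset.sum_congr rfl fun s _ => Finset.sum_congr rfl fun l _ => by ring
    have e2 : z ⬝ᵥ ((Matrix.vecMulVec a a).mulVec z) = (∑ m, z m * a m) ^ 2 := by
      rw [sq, Finset.sum_mul_sum]
      simp only [dotProduct, Matrix.mulVec, Finset.mul_sum, Matrix.vecMulVec_apply]
      exact Finset.sum_congr rfl fun s _ => Finset.sum_congr rfl fun l _ => by ring
    rw [hQ, Matrix.sub_mulVec, dotProduct_sub, e1, e2]
  have hpsd : Q.PosSemidef := by
    refine Matrix.PosSemidef.of_dotProduct_mulVec_nonneg ?_ fun z => ?_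
    · ext i j
      simp only [hQ, Matrix.conjTranspose_apply, Matrix.sub_apply, Matrix.vecMulVec_apply,
        star_trivial, hsym.apply i j]
      ring
    · rw [star_trivial, hQv]
      by_cases hz : z = 0
      · simp [hz]
      · have := (norm_sub_proj hf hom hpd hgX hz).2
        rw [hquad z hz] at this
        linarith
  have hnull : y ⬝ᵥ (Q.mulVec y) = 0 := by
    rw [hQv, ← hb]
    have h1 : ∑ i, b * dd i f y * X i y = ∑ i, 2 * f y * a i * X i y :=
      Finset.sum_congr rfl fun i _ => by rw [hcrit]
    simp only [mul_assoc, ← Finset.mul_sum] at h1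
    rw [(norm_sub_proj hf hom hpd hgX hy).1, hb'] at h1
    have h2 := hquad y hy
    simp only [mul_comm (X _ _)] at h2
    rw [h2] at h1
    rw [sq, h1]; ring
  have hQ0 : Q.mulVec y = 0 := by
    rw [← hpsd.dotProduct_mulVec_zero_iff]; simpa using hnull
  refine ⟨fun i => y i / b, fun i => ?_, ?_⟩
  · have h := congrFun hQ0 i
    simp only [hQ, Matrix.mulVec, dotProduct, Matrix.sub_apply, Matrix.vecMulVec_apply, sub_mul,
      Finset.sum_sub_distrib, Pi.zero_apply, mul_assoc, ← Finset.mul_sum, hb'] at h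
    simp only [← mul_div_assoc, ← Finset.sum_div]
    rw [div_eq_iff hβ]; linarith
  · simp only [← mul_div_assoc, ← Finset.sum_div]
    rw [hb', div_self hβ]

end energy

/-! ### The linear algebra at a point -/

/-- The linear algebra at one point. Here `e = dE`, `M` is the Hessian of `A = g^{lm} α_l α_m`, `ξ`
is the covector of `η`, and `hN` is the derivative of the proportionality `dA ∥ ξ`. The symmetry of
`M` leaves a single unknown scalar `κ`, the `ξ ⊗ ξ` coefficient of `M`, and pairing
`gs v = a`, `a v = 1` with `y` and `X` determines it. -/
lemma pointwise_formula {n : ℕ} {E A β η θ : ℝ} {a e ξ y X v : Vec n}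
    {g gs M : Fin n → Fin n → ℝ}
    (hE : 0 < E) (hη : η ≠ 0)
    (hAη : A = η + β ^ 2 / (2 * E))
    (hξ : ∀ i, ξ i = a i - β / (2 * E) * e i)
    (hM : ∀ i j, M i j = M j i)
    (hg : ∀ i j, g i j = g j i)
    (hgs : ∀ i j, gs i j = A * g i j + e i * (θ * ξ j) + e j * (θ * ξ i) + E * M i j)
    (hN : ∀ i j k,
      (M j k - θ * (-(a k * e j) / (2 * E) + β * e k * e j / (2 * E ^ 2)
          - β * g j k / (2 * E))) * ξ i =
      (M i k - θ * (-(a k * e i) / (2 * E) + β * e k * e i / (2 * E ^ 2)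
          - β * g i k / (2 * E))) * ξ j)
    (hay : ∑ i, a i * y i = β) (hey : ∑ i, e i * y i = 2 * E)
    (haX : ∑ i, a i * X i = A) (heX : ∑ i, e i * X i = β)
    (hgy : ∀ i, ∑ j, g i j * y j = e i) (hgX : ∀ i, ∑ j, g i j * X j = a i)
    (hv : ∀ i, ∑ j, gs i j * v j = a i) (hav : ∑ i, a i * v i = 1) (i j : Fin n) :
    gs i j =
        (A - θ * β / 2) * g i j
        + θ * (β / (4 * E)) * ((β / (2 * η)) * (θ - β / E) - 1) * (e i * e j)
        + θ * (E / (2 * η)) * (θ - β / E) * (a i * a j)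
        + (θ / 2) * (1 + β ^ 2 / (2 * E * η) - θ * β / (2 * η)) * (a i * e j + a j * e i) := by
  have hE0 : E ≠ 0 := hE.ne'
  have hξX : ∑ i, ξ i * X i = η := by
    simp only [hξ, sub_mul, Finset.sum_sub_distrib, mul_assoc, ← Finset.mul_sum, haX, heX, hAη]
    field_simp; ring
  have hξy : ∑ i, ξ i * y i = 0 := by
    simp only [hξ, sub_mul, Finset.sum_sub_distrib, mul_assoc, ← Finset.mul_sum, hay, hey]
    field_simp; ring
  -- Contracting `hN` with `X`, on which `ξ` takes the nonzero value `η`, gives `N = ξ ⊗ lam`.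
  set N : Fin n → Fin n → ℝ := fun j k => M j k - θ * (-(a k * e j) / (2 * E)
    + β * e k * e j / (2 * E ^ 2) - β * g j k / (2 * E)) with hNdef
  obtain ⟨lam, hlam⟩ : ∃ lam : Fin n → ℝ, ∀ j k, N j k = ξ j * lam k := by
    refine ⟨fun k => (∑ i, N i k * X i) / η, fun j k => ?_⟩
    have h1 : ∑ i, N j k * ξ i * X i = ∑ i, N i k * ξ j * X i :=
      Finset.sum_congr rfl fun i _ => by rw [show N j k * ξ i = N i k * ξ j from hN i j k]
    have h2 : ∑ i, N j k * ξ i * X i = N j k * η := by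
      rw [← hξX, Finset.mul_sum]; exact Finset.sum_congr rfl fun i _ => by ring
    have h3 : ∑ i, N i k * ξ j * X i = ξ j * ∑ i, N i k * X i := by
      rw [Finset.mul_sum]; exact Finset.sum_congr rfl fun i _ => by ring
    rw [← mul_div_assoc, eq_div_iff hη, ← h2, h1, h3]
  have hMlam : ∀ j k, M j k = ξ j * lam k + θ * (-(a k * e j) / (2 * E)
    + β * e k * e j / (2 * E ^ 2) - β * g j k / (2 * E)) := by
    intro j k; have := hlam j k; simp only [hNdef] at this; linarith
  have ha : ∀ i, a i = ξ i + β / (2 * E) * e i := fun i => by rw [hξ]; ring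
  -- Symmetry of `M` forces `lam + θ / (2E) e` to be proportional to `ξ`.
  obtain ⟨κ, hκ⟩ : ∃ κ : ℝ, ∀ k, lam k = κ * ξ k - θ / (2 * E) * e k := by
    have hsw : ∀ j k, ξ j * (lam k + θ / (2 * E) * e k) = ξ k * (lam j + θ / (2 * E) * e j) := by
      intro j k
      have h1 := hM j k
      rw [hMlam, hMlam, hg k j, ha k, ha j] at h1
      linear_combination h1
    refine ⟨(∑ j, (lam j + θ / (2 * E) * e j) * X j) / η, fun k => ?_⟩
    have h1 : ∑ j, ξ j * (lam k + θ / (2 * E) * e k) * X j =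
        ∑ j, ξ k * (lam j + θ / (2 * E) * e j) * X j :=
      Finset.sum_congr rfl fun j _ => by rw [hsw]
    have h2 : ∑ j, ξ j * (lam k + θ / (2 * E) * e k) * X j = η * (lam k + θ / (2 * E) * e k) := by
      rw [← hξX, Finset.sum_mul]; exact Finset.sum_congr rfl fun i _ => by ring
    have h3 : ∑ j, ξ k * (lam j + θ / (2 * E) * e j) * X j =
        ξ k * ∑ j, (lam j + θ / (2 * E) * e j) * X j := by
      rw [Finset.mul_sum]; exact Finset.sum_congr rfl fun i _ => by ring
    rw [h2, h3] at h1
    field_simp at h1 ⊢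
    linarith
  have hgs' : ∀ i j, gs i j = (A - θ * β / 2) * g i j + E * κ * (ξ i * ξ j)
      + θ / 2 * (ξ i * e j + ξ j * e i) + θ * β / (4 * E) * (e i * e j) := by
    intro i j
    rw [hgs, hMlam, hκ, ha j]
    field_simp
    ring
  set c : ℝ := ∑ i, e i * v i with hc
  have hξv : ∑ i, ξ i * v i = 1 - β * c / (2 * E) := by
    simp only [hξ, sub_mul, Finset.sum_sub_distrib, mul_assoc, ← Finset.mul_sum, hav, ← hc]
    ring
  set w : ℝ := ∑ i, ξ i * v i with hw
  -- The equation `gs v = a` paired with an arbitrary vector `u`.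
  have pair : ∀ u : Vec n, ∑ i, a i * u i = (A - θ * β / 2) * (∑ i, (∑ j, g i j * u j) * v i)
      + E * κ * w * (∑ i, ξ i * u i)
      + θ / 2 * (c * (∑ i, ξ i * u i) + w * (∑ i, e i * u i))
      + θ * β / (4 * E) * c * (∑ i, e i * u i) := by
    intro u
    have e1 : ∀ i, a i = (A - θ * β / 2) * (∑ j, g i j * v j) + E * κ * w * ξ i
        + θ / 2 * (c * ξ i + w * e i) + θ * β / (4 * E) * c * e i := by
      intro i
      rw [← hv i, hw, hc]
      simp only [Finset.mul_sum, Finset.sum_mul, ← Finset.sum_add_distrib]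
      exact Finset.sum_congr rfl fun j _ => by rw [hgs']; ring
    have e2 : ∑ i, (∑ j, g i j * u j) * v i = ∑ i, (∑ j, g i j * v j) * u i := by
      simp only [Finset.sum_mul]
      rw [Finset.sum_comm]
      exact Finset.sum_congr rfl fun i _ => Finset.sum_congr rfl fun j _ => by rw [hg j i]; ring
    rw [e2]
    simp only [Finset.mul_sum, ← Finset.sum_add_distrib]
    refine Finset.sum_congr rfl fun i _ => ?_
    conv_lhs => rw [e1 i]
    rw [Finset.mul_sum]
    simp only [Finset.sum_mul, Finset.mul_sum]
    ring_nf
    simp only [Finset.sum_mul]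
    ring_nf
  have py := pair y
  have pX := pair X
  simp only [hgy, hgX, hξy, hξX, hey, heX, haX, hay, hav, ← hc] at py pX
  -- `β - cA = E θ w`
  have r1 : β - c * A = E * θ * w := by
    field_simp at py; rw [hξv] at py ⊢; field_simp at py ⊢; linarith
  -- If `w = 0` then `β c = 2E` and `c A = β`, whence `η = A - β² / (2E) = 0`.
  have hw0 : w ≠ 0 := by
    intro h0
    rw [h0] at r1 hξv
    apply hη
    have h2E : β * c = 2 * E := by field_simp at hξv; linarith
    have hc0 : c ≠ 0 := by rintro h; rw [h] at h2E; linarith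
    have hAc : c * η = 0 := by
      have : c * A = β := by linarith
      rw [hAη] at this
      have h3 : c * (β ^ 2 / (2 * E)) = β := by
        rw [← h2E]
        have hb : β ≠ 0 := by rintro h; rw [h] at h2E; linarith
        field_simp
      linarith
    exact (mul_eq_zero.mp hAc).resolve_left hc0
  have r2 : E * κ * η = E * θ ^ 2 / 2 - θ * β / 2 := by
    apply mul_left_cancel₀ hw0
    have hη' : η = A - β ^ 2 / (2 * E) := by linarith
    have : θ / 2 * (c * η) + θ * β / (4 * E) * c * β = θ / 2 * (c * A) := by
      rw [hη']; field_simp; ring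
    linear_combination (-1) * pX - this + (θ / 2) * r1
  have hκ' : κ = θ * (θ - β / E) / (2 * η) := by
    field_simp
    linarith
  rw [hgs', hκ', hξ, hξ]
  field_simp
  ring

/-! ### The formula -/

lemma hessian_quadratic {n : ℕ} (gs : Matrix (Fin n) (Fin n) ℝ) (hsym : gs.IsSymm)
    (i j : Fin n) (y : Vec n) :
    dd i (dd j fun z : Vec n => (1/2) * ∑ k, ∑ l, gs k l * z k * z l) y = gs i j := by
  have h1 : (dd j fun z : Vec n => (1/2) * ∑ k, ∑ l, gs k l * z k * z l) =
      fun z => ∑ l, z l * gs j l := by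
    funext z
    have e : (fun z : Vec n => (1/2) * ∑ k, ∑ l, gs k l * z k * z l) =
        fun z => (1/2) * ∑ k, z k * ∑ l, z l * gs k l := by
      funext z; congr 1
      exact Finset.sum_congr rfl fun k _ => by
        rw [Finset.mul_sum]; exact Finset.sum_congr rfl fun l _ => by ring
    rw [e, dd_mul (by fun_prop) (by fun_prop), dd_const,
      dd_sum _ (fun k z => z k * ∑ l, z l * gs k l) (fun k _ => by fun_prop)]
    have e2 : ∀ k, dd j (fun z : Vec n => z k * ∑ l, z l * gs k l) z
        = z k * gs j k + (∑ l, z l * gs k l) * (if k = j then 1 else 0) := by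
      intro k
      rw [dd_mul (by fun_prop) (by fun_prop), dd_linear, dd_coord, hsym.apply]
    simp only [e2, Finset.sum_add_distrib, mul_ite, mul_one, mul_zero, Finset.sum_ite_eq',
      Finset.mem_univ, if_true]
    ring
  rw [h1, dd_linear, hsym.apply]

/-- The Riemannian metric formula on one tangent space, with `f` the energy, `a` the constant
covector `dα` and `X` its `g`-gradient. -/
lemma metric_formula_fiber {n : ℕ} {f : Vec n → ℝ} {a : Vec n} {X : Fin n → Vec n → ℝ}
    {A β η θ : Vec n → ℝ} (hf : SmoothOff f)
    (hom : ∀ z : Vec n, z ≠ 0 → ∀ t : ℝ, 0 < t → f (t • z) = t ^ 2 * f z)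
    (hpd : ∀ z : Vec n, z ≠ 0 → (Matrix.of fun i j => dd i (dd j f) z).PosDef)
    (hX : ∀ l, ∀ z : Vec n, z ≠ 0 → DifferentiableAt ℝ (X l) z)
    (hgX : ∀ z : Vec n, z ≠ 0 → ∀ i, ∑ j, dd i (dd j f) z * X j z = a i) (ha : a ≠ 0)
    {gs : Matrix (Fin n) (Fin n) ℝ} (hsym : gs.IsSymm)
    (hA : A = fun z => ∑ l, X l z * a l) (hβ : β = fun z => ∑ m, z m * a m)
    (hη : η = fun z => ∑ l, (X l z - (β z / (2 * f z)) * z l) * a l)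
    (hquad : ∀ z : Vec n, z ≠ 0 → f z * A z = (1/2) * ∑ i, ∑ j, gs i j * z i * z j)
    (hdep : ∀ z : Vec n, z ≠ 0 → η z ≠ 0 → ∀ l,
      ∑ s, X s z * dd s (X l) z = θ z * (X l z - (β z / (2 * f z)) * z l))
    {y : Vec n} (hy : y ≠ 0) (hηy : η y ≠ 0) (i j : Fin n) :
    gs i j = (A y - θ y * β y / 2) * dd i (dd j f) y
      + θ y * (β y / (4 * f y)) * ((β y / (2 * η y)) * (θ y - β y / f y) - 1)
        * (dd i f y * dd j f y)
      + θ y * (f y / (2 * η y)) * (θ y - β y / f y) * (a i * a j)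
      + (θ y / 2) * (1 + β y ^ 2 / (2 * f y * η y) - θ y * β y / (2 * η y))
        * (a i * dd j f y + a j * dd i f y) := by
  have hpos : ∀ z : Vec n, z ≠ 0 → 0 < f z := fun z hz => energy_pos hf hom hpd hz
  have hβd : ∀ z, DifferentiableAt ℝ β z := fun z => by rw [hβ]; fun_prop
  have hηA : ∀ z, η z = A z - β z ^ 2 / (2 * f z) := by
    intro z
    have : ∑ l, (X l z - (β z / (2 * f z)) * z l) * a l
        = ∑ l, X l z * a l - β z / (2 * f z) * ∑ m, z m * a m := by
      rw [Finset.mul_sum, ← Finset.sum_sub_distrib]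
      exact Finset.sum_congr rfl fun l _ => by ring
    simp only [hη, this, hA]
    rw [show ∑ m, z m * a m = β z by rw [hβ]]
    ring
  -- `A` is smooth because `f * A` is a polynomial.
  have hAs : SmoothOff A := by
    have h : SmoothOff fun z : Vec n => ((1/2) * ∑ i, ∑ j, gs i j * z i * z j) / f z := by
      intro z hz
      refine ContDiffAt.div ?_ (hf z hz) (hpos z hz).ne'
      fun_prop
    exact h.congr fun z hz => by
      rw [← hquad z hz, mul_div_cancel_left₀ _ (hpos z hz).ne']
  set ξ : Fin n → Vec n → ℝ := fun i z => a i - β z / (2 * f z) * dd i f z with hξ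
  have hξd : ∀ i z, z ≠ 0 → DifferentiableAt ℝ (ξ i) z := by
    intro i z hz
    have h1 := hf.diff hz
    have h2 := hβd z
    have h3 : 2 * f z ≠ 0 := by have := hpos z hz; positivity
    have h4 := (hf.dd i).diff hz
    simp only [hξ]
    fun_prop (disch := assumption)
  have hdA : ∀ z, z ≠ 0 → η z ≠ 0 → ∀ k, dd k A z = θ z * ξ k z := by
    intro z hz hηz k
    rw [hA, ← metric_accel hf hX hgX hz k]
    simp only [hdep z hz hηz]
    have : ∑ l, dd k (dd l f) z * (θ z * (X l z - β z / (2 * f z) * z l)) =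
        θ z * (∑ l, dd k (dd l f) z * X l z
          - β z / (2 * f z) * ∑ l, dd k (dd l f) z * z l) := by
      rw [Finset.mul_sum, ← Finset.sum_sub_distrib, Finset.mul_sum]
      exact Finset.sum_congr rfl fun l _ => by ring
    rw [this, hgX z hz, euler_metric hf hom hz]
  -- `η ≠ 0` is an open condition, so `dA = θ ξ` holds near `y` and can be differentiated.
  have hev : ∀ᶠ z in nhds y, z ≠ 0 ∧ η z ≠ 0 := by
    have hc : ContinuousAt (fun z => A z - β z ^ 2 / (2 * f z)) y := by
      have h1 := (hf.diff hy).continuousAt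
      have h2 := (hβd y).continuousAt
      have h3 : 2 * f y ≠ 0 := by have := hpos y hy; positivity
      have h4 := (hAs.diff hy).continuousAt
      fun_prop (disch := assumption)
    rw [← funext hηA] at hc
    exact (eventually_off hy fun z hz => hz).and (hc.eventually_ne hηy)
  -- `ξ` is differentiated through the polynomial identity `2 f ξ_j + β f_j = 2 f a_j`.
  have hdξ : ∀ j k, dd k (ξ j) y = -(a k * dd j f y) / (2 * f y)
      + β y * dd k f y * dd j f y / (2 * f y ^ 2) - β y * dd j (dd k f) y / (2 * f y) := by
    intro j k
    have hfy := (hpos y hy).ne'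
    have hprod := dd_congr_off hy (h := fun z => 2 * f z * ξ j z + β z * dd j f z)
      (k := fun z => f z * (2 * a j))
      (fun z hz => by have := (hpos z hz).ne'; simp only [hξ]; field_simp; ring) k
    have d1 := hf.diff hy
    have d2 := (hf.dd j).diff hy
    have d3 := hβd y
    have d4 := hξd j y hy
    have hβk : dd k β y = a k := by rw [hβ, dd_linear]
    rw [dd_add (by fun_prop) (by fun_prop), dd_mul (by fun_prop) d4, dd_mul d3 d2,
      dd_mul (by fun_prop) d1, dd_mul d1 (by fun_prop), dd_const, dd_const, hβk,
      dd_comm hf hy k j] at hprod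
    have hξy : ξ j y = a j - β y / (2 * f y) * dd j f y := rfl
    rw [hξy] at hprod
    field_simp at hprod ⊢
    linear_combination (1 / 2 : ℝ) * hprod
  -- Differentiating `A_j ξ_i = A_i ξ_j` avoids any differentiability question about `θ`.
  have hN : ∀ i j k,
      (dd j (dd k A) y - θ y * dd k (ξ j) y) * ξ i y =
      (dd i (dd k A) y - θ y * dd k (ξ i) y) * ξ j y := by
    intro i j k
    have he : (fun z => dd j A z * ξ i z) =ᶠ[nhds y] fun z => dd i A z * ξ j z := by
      filter_upwards [hev] with z hz
      rw [hdA z hz.1 hz.2, hdA z hz.1 hz.2]; ring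
    have h := dd_congr he k
    rw [dd_mul ((hAs.dd j).diff hy) (hξd i y hy), dd_mul ((hAs.dd i).diff hy) (hξd j y hy),
      hdA y hy hηy, hdA y hy hηy, dd_comm hAs hy k j, dd_comm hAs hy k i] at h
    linear_combination h
  have hgs : ∀ i j, gs i j = A y * dd i (dd j f) y + dd i f y * (θ y * ξ j y)
      + dd j f y * (θ y * ξ i y) + f y * dd i (dd j A) y := by
    intro i j
    rw [← hessian_quadratic gs hsym i j y,
      ← dd_congr_off hy (h := fun z => f z * dd j A z + A z * dd j f z) (fun z hz => by
        rw [← dd_mul (hf.diff hz) (hAs.diff hz)]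
        exact dd_congr_off hz hquad j) i]
    have d1 := hf.diff hy
    have d2 := (hf.dd j).diff hy
    have d3 := hAs.diff hy
    have d4 := (hAs.dd j).diff hy
    rw [dd_add (by fun_prop) (by fun_prop), dd_mul d1 d4, dd_mul d3 d2, hdA y hy hηy,
      hdA y hy hηy]
    ring
  obtain ⟨v, hv, hav⟩ := exists_unit_gradient hf hom hpd hgX ha hsym
    (fun z hz => by rw [← hquad z hz, hA])
  have hay : ∑ i, a i * y i = β y := by simp only [hβ, mul_comm]
  refine pointwise_formula (ξ := fun i => ξ i y) (M := fun i j => dd i (dd j A) y) (y := y)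
    (X := fun l => X l y) (v := v) (e := fun i => dd i f y) (g := fun i j => dd i (dd j f) y)
    (hpos y hy) hηy (by rw [hηA]; ring) (fun i => rfl) (dd_comm hAs hy) (dd_comm hf hy) hgs
    ?_ hay ?_ ?_ ?_ (euler_metric hf hom hy) (hgX y hy) hv hav i j
  · intro i j k
    have := hN i j k
    rwa [hdξ, hdξ] at this
  · simp only [← euler_energy hf hom hy, mul_comm]
  · simp only [hA, mul_comm]
  · rw [(norm_sub_proj hf hom hpd hgX hy).1, hay]

/-- formula (36) of the paper. Under the contracted conformal
invariance of the mixed Berwald curvature and the relation `X^sX^l_s = θ·η^l` (with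
`θ = (X^l_sX^sα_l)/η`) over `p`, the Riemannian Hessian `g*_{ij}(p)` is the stated
combination of `g_{ij}`, `E_iE_j`, `α_iα_j` and `α_iE_j + α_jE_i`; in particular it lies
in their linear span at each such point. -/
theorem riemannian_metric_formula
    {n : ℕ} (hn : 2 ≤ n) (U : Set (Vec n)) (hU : IsOpen U)
    (E : Fn n) (hE : IsFinslerEnergy U E)
    (α : Vec n → ℝ) (hα : ContDiffOn ℝ (⊤ : ℕ∞) α U)
    (p : Vec n) (hp : p ∈ U) (hdα : fderiv ℝ α p ≠ 0)
    (hinv : ∀ x ∈ U, ∀ y : Vec n, y ≠ 0 → ∀ i j k : Fin n,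
      (∑ l, mixedCurv (confE E α) l i j k x y * pda α l x) =
        ∑ l, mixedCurv E l i j k x y * pda α l x)
    (gs : Matrix (Fin n) (Fin n) ℝ) (hsym : gs.IsSymm) (hpos : gs.PosDef)
    (hquad : ∀ y : Vec n, y ≠ 0 →
      Estar E α p y = (1/2) * ∑ i, ∑ j, gs i j * y i * y j)
    (hdep : ∀ y : Vec n, y ≠ 0 → etaSc E α p y ≠ 0 → ∀ l : Fin n,
      Wup E α l p y = thetaFn E α p y * etaUp E α l p y) :
    ∀ y : Vec n, y ≠ 0 → etaSc E α p y ≠ 0 →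
      (∀ i j : Fin n, gs i j =
        (Xalpha E α p y - thetaFn E α p y * yalpha α p y / 2) * gdown E i j p y
        + thetaFn E α p y * (yalpha α p y / (4 * E p y)) *
            ((yalpha α p y / (2 * etaSc E α p y)) *
                (thetaFn E α p y - yalpha α p y / E p y) - 1) *
            (pdy i E p y * pdy j E p y)
        + thetaFn E α p y * (E p y / (2 * etaSc E α p y)) *
            (thetaFn E α p y - yalpha α p y / E p y) * (pda α i p * pda α j p)
        + (thetaFn E α p y / 2) *
            (1 + (yalpha α p y) ^ 2 / (2 * E p y * etaSc E α p y)
              - thetaFn E α p y * yalpha α p y / (2 * etaSc E α p y)) *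
            (pda α i p * pdy j E p y + pda α j p * pdy i E p y)) ∧
      (∃ cA cP cR cQ : ℝ, ∀ i j : Fin n, gs i j =
        cA * gdown E i j p y + cP * (pdy i E p y * pdy j E p y)
        + cR * (pda α i p * pda α j p)
        + cQ * (pda α i p * pdy j E p y + pda α j p * pdy i E p y)) := by
  intro y hy hηy
  have hf : SmoothOff (E p) := by
    intro z hz
    have hopen : IsOpen (U ×ˢ {y : Vec n | y ≠ 0}) := hU.prod isOpen_ne
    have h1 : ContDiffAt ℝ (⊤ : ℕ∞) (fun q : Vec n × Vec n => E q.1 q.2) (p, z) :=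
      hE.smooth.contDiffAt (hopen.mem_nhds ⟨hp, hz⟩)
    exact h1.comp (f := fun z : Vec n => (p, z)) z (contDiffAt_const.prodMk contDiffAt_id)
  have hpd := hE.posdef p hp
  have hdet : ∀ z : Vec n, z ≠ 0 → IsUnit (gmat E p z).det :=
    fun z hz => (hpd z hz).det_pos.ne'.isUnit
  have hX : ∀ l, ∀ z : Vec n, z ≠ 0 → DifferentiableAt ℝ (Xup E α l p) z := by
    intro l z hz
    refine DifferentiableAt.fun_sum fun m _ => DifferentiableAt.mul_const ?_ _
    exact differentiableAt_matrix_inv (M := gmat E p)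
      (fun i j => ((hf.dd j).dd i).diff hz) (hdet z hz).ne_zero l m
  have hgX : ∀ z : Vec n, z ≠ 0 → ∀ i,
      ∑ j, dd i (dd j (E p)) z * Xup E α j p z = pda α i p := by
    intro z hz i
    have h : (gmat E p z).mulVec ((gmat E p z)⁻¹.mulVec fun m => pda α m p) =
        fun m => pda α m p := by
      rw [Matrix.mulVec_mulVec, Matrix.mul_nonsing_inv _ (hdet z hz), Matrix.one_mulVec]
    exact congrFun h i
  have ha : (fun i => pda α i p) ≠ 0 := by
    intro h
    apply hdα
    ext v
    rw [fderiv_eq_sum]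
    exact Finset.sum_eq_zero fun i _ => by
      rw [show dd i α p = 0 from congrFun h i, mul_zero]
  have key := metric_formula_fiber (a := fun i => pda α i p) (X := fun l => Xup E α l p)
    (A := Xalpha E α p) (β := yalpha α p) (η := etaSc E α p) (θ := thetaFn E α p)
    hf (hE.homog p hp) hpd hX hgX ha hsym rfl rfl rfl hquad hdep hy hηy
  exact ⟨key, _, _, _, _, key⟩

end FinslerConformal
end
end

section
/- Let n ≥ 3. Assume P̃^l_{ijk}α_l = P^l_{ijk}α_l at every (x,y) ∈ U × (ℝ^n \ {0}), fix p ∈ U with dα ≠ 0 at p, and assume that the vectors η^l and X^sX^l_s are linearly dependent at every nonzero y over p. Then both functions v ↦ (X^lα_l)(p,v) and v ↦ F(p,v)·(X^l_sX^sα_l)(p,v) are constant on the punctured hyperplane T_pN \ {0} = { v ∈ ℝ^n \ {0} : α_i(p) v^i = 0 }. -/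
/-!
Everything happens on the fibre over `p`. Write `a = X^l α_l`, `F = √(2E)` and
`s = y^m α_m / F`, smooth functions on the punctured fibre.

Differentiating `g_{il} X^l = α_i` along the fibre and using the total symmetry of the Cartan tensor
shows that lowering the index of `W = X^s X^l_s` gives `da` (`gdown_mul_W`). By Euler's identity,
lowering the index of `η` gives `α - (y^m α_m / 2E) dE = F ds`. Hence the dependence hypothesis says
`da ∧ ds = 0` (`wedge_eq_zero`).

On the hyperplane `y^m α_m = 0` one has `ds = α / F ≠ 0`, so `da` vanishes on vectors tangent to the
hyperplane and `a` is locally constant there (`const_of_wedge`). Near the punctured hyperplane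
`da = K ds`, and `0 = d(da) = dK ∧ ds` shows that `K` is locally constant on it too
(`const_factor_of_wedge`). Since `n ≥ 3`, the punctured hyperplane is connected, so both `a` and
`K` are constant. Finally `F W^l α_l = F da(X) = K a` on the hyperplane.
-/


/- Common framework: Finsler energies in local coordinates, following the paper's
   notation.  `x` is the base point, `y` the fiber (direction) variable. -/

noncomputable section
open scoped BigOperators

namespace FinslerConformal

/-! ### Calculus on the punctured fibre -/

lemma isOpen_punctured (n : ℕ) : IsOpen {y : Vec n | y ≠ 0} := isOpen_ne

lemma contDiffOn_fderiv_apply {n : ℕ} {f : Vec n → ℝ}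
    (hf : ContDiffOn ℝ (⊤ : ℕ∞) f {y | y ≠ 0}) (u : Vec n) :
    ContDiffOn ℝ (⊤ : ℕ∞) (fun y => fderiv ℝ f y u) {y | y ≠ 0} :=
  (hf.fderiv_of_isOpen (isOpen_punctured n) (by simp)).clm_apply contDiffOn_const

lemma differentiableAt_of_smooth {n : ℕ} {f : Vec n → ℝ}
    (hf : ContDiffOn ℝ (⊤ : ℕ∞) f {y | y ≠ 0}) {y : Vec n} (hy : y ≠ 0) :
    DifferentiableAt ℝ f y :=
  (hf.contDiffAt ((isOpen_punctured n).mem_nhds hy)).differentiableAt (by simp)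

lemma fderiv_fderiv_comm {n : ℕ} {f : Vec n → ℝ}
    (hf : ContDiffOn ℝ (⊤ : ℕ∞) f {y | y ≠ 0}) {y : Vec n} (hy : y ≠ 0) (u w : Vec n) :
    fderiv ℝ (fun z => fderiv ℝ f z u) y w = fderiv ℝ (fun z => fderiv ℝ f z w) y u := by
  have hc := hf.contDiffAt ((isOpen_punctured n).mem_nhds hy)
  have h2 : (2 : WithTop ℕ∞) ≤ ((⊤ : ℕ∞) : WithTop ℕ∞) :=
    WithTop.coe_le_coe.2 (le_top : (2 : ℕ∞) ≤ ⊤)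
  have hsymm : IsSymmSndFDerivAt ℝ f y := hc.isSymmSndFDerivAt (by simpa using h2)
  have hd : DifferentiableAt ℝ (fderiv ℝ f) y :=
    (hc.fderiv_right (m := 1) (by norm_num; exact h2)).differentiableAt (by simp)
  have key : ∀ a b : Vec n,
      fderiv ℝ (fun z => fderiv ℝ f z a) y b = fderiv ℝ (fderiv ℝ f) y b a := by
    intro a b
    rw [fderiv_clm_apply hd (differentiableAt_const a)]
    simp
  rw [key, key]
  exact hsymm w u

lemma clm_apply_eq_sum {n : ℕ} (T : Vec n →L[ℝ] ℝ) (u : Vec n) :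
    T u = ∑ i, u i * T (Pi.single i 1) := by
  conv_lhs => rw [pi_eq_sum_univ' u]
  simp [map_sum]

lemma hasFDerivAt_quotient {n : ℕ} {f g : Vec n → ℝ} {f' g' : Vec n →L[ℝ] ℝ} {y : Vec n}
    (hf : HasFDerivAt f f' y) (hg : HasFDerivAt g g' y) (h : g y ≠ 0) :
    HasFDerivAt (fun z => f z / g z) ((g y ^ 2)⁻¹ • (g y • f' - f y • g')) y := by
  have h1 := hf.mul ((hasDerivAt_inv h).comp_hasFDerivAt y hg)
  refine (h1.congr_fderiv ?_).congr_of_eventuallyEq (.of_forall fun z => div_eq_mul_inv _ _)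
  ext u
  simp only [add_apply, sub_apply, smul_apply, smul_eq_mul, Function.comp_apply]
  field_simp
  ring

/-- The punctured kernel of a functional on `ℝⁿ` is connected for `n ≥ 3`, so a function whose
differential vanishes on the kernel is constant there. -/
lemma const_on_ker {n : ℕ} (hn : 3 ≤ n) (L : Vec n →L[ℝ] ℝ) (f : Vec n → ℝ)
    (hf : ∀ y, y ≠ 0 → L y = 0 → DifferentiableAt ℝ f y)
    (h0 : ∀ y, y ≠ 0 → L y = 0 → ∀ u, L u = 0 → fderiv ℝ f y u = 0)
    {v w : Vec n} (hv : v ≠ 0) (hw : w ≠ 0) (hLv : L v = 0) (hLw : L w = 0) :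
    f v = f w := by
  let H := LinearMap.ker (L : Vec n →ₗ[ℝ] ℝ)
  have hrank : 1 < Module.rank ℝ H := by
    have h1 := LinearMap.finrank_range_add_finrank_ker (L : Vec n →ₗ[ℝ] ℝ)
    have h2 := Submodule.finrank_le (LinearMap.range (L : Vec n →ₗ[ℝ] ℝ))
    simp only [Module.finrank_self, Module.finrank_fin_fun] at h1 h2
    have h3 : 1 < Module.finrank ℝ H := by
      show 1 < Module.finrank ℝ (LinearMap.ker (L : Vec n →ₗ[ℝ] ℝ))
      omega
    rw [← Module.finrank_eq_rank]
    exact_mod_cast h3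
  have hconn := (isConnected_compl_singleton_of_one_lt_rank hrank (0 : H)).isPreconnected
  have hmem : ∀ z : H, L z = 0 := fun z => z.2
  have hder : ∀ z : H, z ≠ 0 →
      HasFDerivAt (fun z : H => f z) ((fderiv ℝ f z).comp H.subtypeL) z := by
    intro z hz
    have hz' : (z : Vec n) ≠ 0 := by simpa using hz
    exact HasFDerivAt.comp z (hf z hz' (hmem z)).hasFDerivAt H.subtypeL.hasFDerivAt
  have := isOpen_compl_singleton.is_const_of_fderiv_eq_zero (𝕜 := ℝ) (f := fun z : H => f z)
    hconn
    (fun z hz => (hder z hz).differentiableAt.differentiableWithinAt)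
    (fun z hz => by
      have hz' : (z : Vec n) ≠ 0 := by simpa using hz
      rw [(hder z hz).fderiv]
      ext u
      simpa using h0 z hz' (hmem z) u (hmem u))
    (x := ⟨v, hLv⟩) (y := ⟨w, hLw⟩)
    (by simpa [Subtype.ext_iff] using hv) (by simpa [Subtype.ext_iff] using hw)
  simpa using this

/-- If `a` is smooth, `da ∧ ds = 0` and `ds` is a nonzero multiple of `L` along the hyperplane `L = 0`, then `a`
is constant on the punctured hyperplane. -/
lemma const_of_wedge {n : ℕ} (hn : 3 ≤ n) (L : Vec n →L[ℝ] ℝ) (a s : Vec n → ℝ)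
    (ha : ContDiffOn ℝ (⊤ : ℕ∞) a {y | y ≠ 0})
    (ξ : Vec n) (hξ : L ξ ≠ 0) (c : Vec n → ℝ) (hc : ∀ y, y ≠ 0 → c y ≠ 0)
    (hds : ∀ y, y ≠ 0 → L y = 0 → ∀ u, fderiv ℝ s y u = c y * L u)
    (hw : ∀ y, y ≠ 0 → ∀ u z, fderiv ℝ a y u * fderiv ℝ s y z = fderiv ℝ a y z * fderiv ℝ s y u)
    {v w : Vec n} (hv : v ≠ 0) (hw0 : w ≠ 0) (hLv : L v = 0) (hLw : L w = 0) :
    a v = a w := by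
  refine const_on_ker hn L a (fun y hy _ => differentiableAt_of_smooth ha hy) ?_ hv hw0 hLv hLw
  intro y hy hLy u hu
  have := hw y hy u ξ
  rw [hds y hy hLy, hds y hy hLy, hu] at this
  simpa [hc y hy, hξ] using this

/-- If moreover `s` is smooth, then `da = K ds` near the hyperplane, and `0 = d(da) =
dK ∧ ds` makes the factor `K = da(ξ) / ds(ξ)` constant on the punctured hyperplane as well. -/
lemma const_factor_of_wedge {n : ℕ} (hn : 3 ≤ n) (L : Vec n →L[ℝ] ℝ) (a s : Vec n → ℝ)
    (ha : ContDiffOn ℝ (⊤ : ℕ∞) a {y | y ≠ 0}) (hs : ContDiffOn ℝ (⊤ : ℕ∞) s {y | y ≠ 0})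
    (ξ : Vec n) (hξ : L ξ ≠ 0) (c : Vec n → ℝ) (hc : ∀ y, y ≠ 0 → c y ≠ 0)
    (hds : ∀ y, y ≠ 0 → L y = 0 → ∀ u, fderiv ℝ s y u = c y * L u)
    (hw : ∀ y, y ≠ 0 → ∀ u z, fderiv ℝ a y u * fderiv ℝ s y z = fderiv ℝ a y z * fderiv ℝ s y u)
    {v w : Vec n} (hv : v ≠ 0) (hw0 : w ≠ 0) (hLv : L v = 0) (hLw : L w = 0) :
    fderiv ℝ a v ξ / fderiv ℝ s v ξ = fderiv ℝ a w ξ / fderiv ℝ s w ξ := by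
  have hA : ∀ u y, y ≠ 0 → DifferentiableAt ℝ (fun z => fderiv ℝ a z u) y := fun u y hy =>
    differentiableAt_of_smooth (contDiffOn_fderiv_apply ha u) hy
  have hS : ∀ u y, y ≠ 0 → DifferentiableAt ℝ (fun z => fderiv ℝ s z u) y := fun u y hy =>
    differentiableAt_of_smooth (contDiffOn_fderiv_apply hs u) hy
  have hne : ∀ y, y ≠ 0 → L y = 0 → fderiv ℝ s y ξ ≠ 0 := fun y hy hLy => by
    rw [hds y hy hLy]; exact mul_ne_zero (hc y hy) hξ
  refine const_on_ker hn L (fun y => fderiv ℝ a y ξ / fderiv ℝ s y ξ)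
    (fun y hy hLy => (hasFDerivAt_quotient (hA ξ y hy).hasFDerivAt (hS ξ y hy).hasFDerivAt
      (hne y hy hLy)).differentiableAt) ?_ hv hw0 hLv hLw
  intro y hy hLy u hu
  have hsu : fderiv ℝ s y u = 0 := by rw [hds y hy hLy, hu, mul_zero]
  have hau : fderiv ℝ a y u = 0 := by
    have := hw y hy u ξ
    rw [hsu] at this
    simpa [hne y hy hLy] using this
  -- Differentiate the identity `da(u) ds(ξ) = da(ξ) ds(u)` in the direction `ξ`.
  have hev : (fun z => fderiv ℝ a z u * fderiv ℝ s z ξ) =ᶠ[nhds y]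
      (fun z => fderiv ℝ a z ξ * fderiv ℝ s z u) := by
    filter_upwards [(isOpen_punctured n).mem_nhds hy] with z hz
    exact hw z hz u ξ
  have hD := congrArg (fun T : Vec n →L[ℝ] ℝ => T ξ) hev.fderiv_eq
  rw [fderiv_fun_mul (hA u y hy) (hS ξ y hy), fderiv_fun_mul (hA ξ y hy) (hS u y hy)] at hD
  simp only [add_apply, smul_apply, smul_eq_mul, hsu, hau] at hD
  rw [fderiv_fderiv_comm ha hy u ξ, fderiv_fderiv_comm hs hy u ξ] at hD
  have hq := (hasFDerivAt_quotient (hA ξ y hy).hasFDerivAt (hS ξ y hy).hasFDerivAt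
    (hne y hy hLy)).fderiv
  have hq' := congrArg (fun T : Vec n →L[ℝ] ℝ => T u) hq
  refine Eq.trans hq' ?_
  simp only [sub_apply, smul_apply, smul_eq_mul]
  rw [mul_eq_zero_of_right]
  linarith

/-! ### Geometry of a single fibre -/

lemma contDiffOn_det {n : ℕ} {O : Set (Vec n)} (M : Vec n → Matrix (Fin n) (Fin n) ℝ)
    (h : ∀ i j, ContDiffOn ℝ (⊤ : ℕ∞) (fun y => M y i j) O) :
    ContDiffOn ℝ (⊤ : ℕ∞) (fun y => (M y).det) O := by
  simp only [Matrix.det_apply]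
  refine ContDiffOn.sum fun σ _ => ?_
  exact (contDiffOn_prod fun i _ => h _ _).const_smul _

lemma contDiffOn_inv_entry {n : ℕ} {O : Set (Vec n)} (M : Vec n → Matrix (Fin n) (Fin n) ℝ)
    (h : ∀ i j, ContDiffOn ℝ (⊤ : ℕ∞) (fun y => M y i j) O) (hd : ∀ y ∈ O, (M y).det ≠ 0)
    (i j : Fin n) : ContDiffOn ℝ (⊤ : ℕ∞) (fun y => (M y)⁻¹ i j) O := by
  have hadj : ContDiffOn ℝ (⊤ : ℕ∞) (fun y => (M y).adjugate i j) O := by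
    simp only [Matrix.adjugate_apply]
    refine contDiffOn_det _ fun k l => ?_
    by_cases hk : k = j
    · subst hk
      simpa using contDiffOn_const
    · simpa [Matrix.updateRow_apply, hk] using h k l
  simp only [Matrix.inv_def, Ring.inverse_eq_inv', Matrix.smul_apply, smul_eq_mul]
  exact ((contDiffOn_det M h).inv hd).mul hadj

section Fibre

variable {n : ℕ} {U : Set (Vec n)} {E : Fn n} {p : Vec n}

lemma smooth_fibre (hE : IsFinslerEnergy U E) (hp : p ∈ U) :
    ContDiffOn ℝ (⊤ : ℕ∞) (E p) {y | y ≠ 0} := by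
  have := hE.smooth.comp (s := {y : Vec n | y ≠ 0}) (f := fun y : Vec n => (p, y))
    (contDiff_const.prodMk contDiff_id).contDiffOn (fun y hy => ⟨hp, hy⟩)
  exact this

lemma smooth_pdy {f : Fn n} (hf : ContDiffOn ℝ (⊤ : ℕ∞) (f p) {y | y ≠ 0}) (i : Fin n) :
    ContDiffOn ℝ (⊤ : ℕ∞) (pdy i f p) {y | y ≠ 0} :=
  contDiffOn_fderiv_apply hf _

lemma smooth_gup (hE : IsFinslerEnergy U E) (hp : p ∈ U) (i j : Fin n) :
    ContDiffOn ℝ (⊤ : ℕ∞) (gup E i j p) {y | y ≠ 0} := by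
  refine contDiffOn_inv_entry (fun y => gmat E p y) (fun k l => ?_)
    (fun y hy => (hE.posdef p hp y hy).det_pos.ne') i j
  exact smooth_pdy (smooth_pdy (smooth_fibre hE hp) l) k

lemma smooth_Xup (hE : IsFinslerEnergy U E) (hp : p ∈ U) (α : Vec n → ℝ) (l : Fin n) :
    ContDiffOn ℝ (⊤ : ℕ∞) (Xup E α l p) {y | y ≠ 0} :=
  ContDiffOn.sum fun m _ => (smooth_gup hE hp l m).mul contDiffOn_const

lemma smooth_Xalpha (hE : IsFinslerEnergy U E) (hp : p ∈ U) (α : Vec n → ℝ) :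
    ContDiffOn ℝ (⊤ : ℕ∞) (Xalpha E α p) {y | y ≠ 0} :=
  ContDiffOn.sum fun l _ => (smooth_Xup hE hp α l).mul contDiffOn_const

lemma gdown_symm (hE : IsFinslerEnergy U E) (hp : p ∈ U) {y : Vec n} (hy : y ≠ 0)
    (i j : Fin n) : gdown E i j p y = gdown E j i p y :=
  fderiv_fderiv_comm (smooth_fibre hE hp) hy _ _

lemma cartan_symm (hE : IsFinslerEnergy U E) (hp : p ∈ U) {y : Vec n} (hy : y ≠ 0)
    (i l s : Fin n) : cartanDown E i l s p y = cartanDown E s l i p y :=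
  fderiv_fderiv_comm (f := pdy l E p) (smooth_pdy (smooth_fibre hE hp) l) hy _ _

/-- Euler's identity for the 2-homogeneous energy. -/
lemma euler_energy_s13 (hE : IsFinslerEnergy U E) (hp : p ∈ U) {y : Vec n} (hy : y ≠ 0) :
    fderiv ℝ (E p) y y = 2 * E p y := by
  have hd := (differentiableAt_of_smooth (smooth_fibre hE hp) hy).hasFDerivAt
  have hline : HasDerivAt (fun t : ℝ => t • y) y 1 := by
    simpa using (hasDerivAt_id (1 : ℝ)).smul_const y
  have h1 : HasDerivAt (fun t : ℝ => E p (t • y)) (fderiv ℝ (E p) y y) 1 :=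
    HasFDerivAt.comp_hasDerivAt (1 : ℝ) (by simpa using hd) hline
  have h2 : HasDerivAt (fun t : ℝ => t ^ 2 * E p y) (2 * E p y) 1 := by
    simpa using (hasDerivAt_pow 2 (1 : ℝ)).mul_const (E p y)
  have hev : (fun t : ℝ => E p (t • y)) =ᶠ[nhds 1] fun t => t ^ 2 * E p y := by
    filter_upwards [lt_mem_nhds (zero_lt_one' ℝ)] with t ht
    exact hE.homog p hp y hy t ht
  exact h1.unique (h2.congr_of_eventuallyEq hev)

lemma gdown_mul_y (hE : IsFinslerEnergy U E) (hp : p ∈ U) {y : Vec n} (hy : y ≠ 0)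
    (i : Fin n) : ∑ l, gdown E i l p y * y l = pdy i E p y := by
  have hs := smooth_fibre hE hp
  have hev : (fun z : Vec n => ∑ l, z l * pdy l E p z) =ᶠ[nhds y] fun z => 2 * E p z := by
    filter_upwards [(isOpen_punctured n).mem_nhds hy] with z hz
    rw [← euler_energy_s13 hE hp hz]
    exact (clm_apply_eq_sum _ z).symm
  have hD := congrArg (fun T : Vec n →L[ℝ] ℝ => T (Pi.single i 1)) hev.fderiv_eq
  have h1 : HasFDerivAt (fun z : Vec n => ∑ l, z l * pdy l E p z)
      (∑ l, (y l • fderiv ℝ (pdy l E p) y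
        + pdy l E p y • ContinuousLinearMap.proj (R := ℝ) (φ := fun _ : Fin n => ℝ) l)) y :=
    HasFDerivAt.fun_sum fun l _ => (hasFDerivAt_apply l y).mul
      (differentiableAt_of_smooth (smooth_pdy hs l) hy).hasFDerivAt
  have h2 := (differentiableAt_of_smooth hs hy).hasFDerivAt.const_mul (2 : ℝ)
  rw [h1.fderiv, h2.fderiv] at hD
  simp only [sum_apply, add_apply, smul_apply,
    smul_eq_mul, Finset.sum_add_distrib, ContinuousLinearMap.proj_apply, Pi.single_apply,
    mul_ite, mul_one, mul_zero, Finset.sum_ite_eq', Finset.mem_univ,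
    if_true] at hD
  have h3 : ∑ l, gdown E i l p y * y l
      = ∑ l, y l * fderiv ℝ (pdy l E p) y (Pi.single i 1) :=
    Finset.sum_congr rfl fun l _ => mul_comm _ _
  have h4 : pdy i E p y = fderiv ℝ (E p) y (Pi.single i 1) := rfl
  linarith

lemma energy_pos_s13 (hE : IsFinslerEnergy U E) (hp : p ∈ U) {y : Vec n} (hy : y ≠ 0) :
    0 < E p y := by
  have h := (hE.posdef p hp y hy).dotProduct_mulVec_pos hy
  have h2 : star y ⬝ᵥ (gmat E p y).mulVec y = 2 * E p y := by
    rw [← euler_energy_s13 hE hp hy, clm_apply_eq_sum]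
    refine Finset.sum_congr rfl fun i _ => ?_
    have := gdown_mul_y hE hp hy i
    simp only [star_trivial]
    congr 1
  linarith

lemma gdown_mul_X (hE : IsFinslerEnergy U E) (hp : p ∈ U) (α : Vec n → ℝ) {y : Vec n}
    (hy : y ≠ 0) (i : Fin n) : ∑ l, gdown E i l p y * Xup E α l p y = pda α i p := by
  have hdet : IsUnit (gmat E p y).det := (hE.posdef p hp y hy).det_pos.ne'.isUnit
  have h : (gmat E p y).mulVec ((gmat E p y)⁻¹.mulVec fun m => pda α m p)
      = fun m => pda α m p := by
    rw [Matrix.mulVec_mulVec, Matrix.mul_nonsing_inv _ hdet, Matrix.one_mulVec]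
  exact congrFun h i

/-- The derivative of `g_{il} X^l = α_i` along the fibre. -/
lemma gdown_mul_XupD (hE : IsFinslerEnergy U E) (hp : p ∈ U) (α : Vec n → ℝ) {y : Vec n}
    (hy : y ≠ 0) (i s : Fin n) : ∑ l, gdown E i l p y * XupD E α l s p y
      = - ∑ l, cartanDown E i l s p y * Xup E α l p y := by
  have hev : (fun z : Vec n => ∑ l, gdown E i l p z * Xup E α l p z) =ᶠ[nhds y]
      fun _ => pda α i p := by
    filter_upwards [(isOpen_punctured n).mem_nhds hy] with z hz
    exact gdown_mul_X hE hp α hz i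
  have hD := congrArg (fun T : Vec n →L[ℝ] ℝ => T (Pi.single s 1)) hev.fderiv_eq
  have h1 : HasFDerivAt (fun z : Vec n => ∑ l, gdown E i l p z * Xup E α l p z)
      (∑ l, (gdown E i l p y • fderiv ℝ (Xup E α l p) y
        + Xup E α l p y • fderiv ℝ (gdown E i l p) y)) y :=
    HasFDerivAt.fun_sum fun l _ =>
      (differentiableAt_of_smooth (smooth_pdy (smooth_pdy (smooth_fibre hE hp) l) i)
        hy).hasFDerivAt.mul (differentiableAt_of_smooth (smooth_Xup hE hp α l) hy).hasFDerivAt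
  rw [h1.fderiv] at hD
  simp only [sum_apply, add_apply, smul_apply,
    smul_eq_mul, Finset.sum_add_distrib, fderiv_fun_const, Pi.zero_apply, zero_apply] at hD
  have h3 : ∑ l, cartanDown E i l s p y * Xup E α l p y
      = ∑ l, Xup E α l p y * fderiv ℝ (gdown E i l p) y (Pi.single s 1) :=
    Finset.sum_congr rfl fun l _ => mul_comm _ _
  rw [h3]
  exact eq_neg_of_add_eq_zero_left hD

lemma fderiv_Xalpha (hE : IsFinslerEnergy U E) (hp : p ∈ U) (α : Vec n → ℝ) {y : Vec n}
    (hy : y ≠ 0) (i : Fin n) :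
    fderiv ℝ (Xalpha E α p) y (Pi.single i 1) = ∑ l, XupD E α l i p y * pda α l p := by
  have h1 : HasFDerivAt (Xalpha E α p)
      (∑ l, pda α l p • fderiv ℝ (Xup E α l p) y) y :=
    HasFDerivAt.fun_sum fun l _ =>
      (differentiableAt_of_smooth (smooth_Xup hE hp α l) hy).hasFDerivAt.mul_const _
  rw [h1.fderiv]
  simp only [sum_apply, smul_apply, smul_eq_mul]
  exact Finset.sum_congr rfl fun l _ => mul_comm _ _

/-- `W` is the `g`-gradient of `X^l α_l` along the fibre: both sides equal `-C_{ils} X^l X^s`. -/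
lemma gdown_mul_W (hE : IsFinslerEnergy U E) (hp : p ∈ U) (α : Vec n → ℝ) {y : Vec n}
    (hy : y ≠ 0) (i : Fin n) :
    ∑ l, gdown E i l p y * Wup E α l p y = fderiv ℝ (Xalpha E α p) y (Pi.single i 1) := by
  rw [fderiv_Xalpha hE hp α hy]
  have hL : ∑ l, gdown E i l p y * Wup E α l p y
      = ∑ s, Xup E α s p y * ∑ l, gdown E i l p y * XupD E α l s p y := by
    simp only [Wup, Finset.mul_sum]
    rw [Finset.sum_comm]
    exact Finset.sum_congr rfl fun _ _ => Finset.sum_congr rfl fun _ _ => by ring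
  have hR : ∑ l, XupD E α l i p y * pda α l p
      = ∑ s, Xup E α s p y * ∑ l, gdown E s l p y * XupD E α l i p y := by
    simp only [Finset.mul_sum]
    rw [Finset.sum_comm]
    refine Finset.sum_congr rfl fun l _ => ?_
    rw [← gdown_mul_X hE hp α hy l, Finset.mul_sum]
    refine Finset.sum_congr rfl fun s _ => ?_
    rw [gdown_symm hE hp hy l s]
    ring
  rw [hL, hR]
  refine Finset.sum_congr rfl fun s _ => ?_
  rw [gdown_mul_XupD hE hp α hy, gdown_mul_XupD hE hp α hy]
  congr 2
  exact Finset.sum_congr rfl fun l _ => by rw [cartan_symm hE hp hy]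

lemma gdown_mul_eta (hE : IsFinslerEnergy U E) (hp : p ∈ U) (α : Vec n → ℝ) {y : Vec n}
    (hy : y ≠ 0) (i : Fin n) :
    ∑ l, gdown E i l p y * etaUp E α l p y
      = pda α i p - yalpha α p y / (2 * E p y) * pdy i E p y := by
  rw [← gdown_mul_X hE hp α hy i, ← gdown_mul_y hE hp hy i, Finset.mul_sum,
    ← Finset.sum_sub_distrib]
  exact Finset.sum_congr rfl fun l _ => by simp only [etaUp]; ring

lemma yalpha_eq (α : Vec n → ℝ) (y : Vec n) : yalpha α p y = fderiv ℝ α p y :=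
  (clm_apply_eq_sum _ y).symm

/-- The normalized functional `s = y^m α_m / F` on the fibre over `p`. -/
def slope (E : Fn n) (α : Vec n → ℝ) (p : Vec n) : Vec n → ℝ :=
  fun y => fderiv ℝ α p y / Real.sqrt (2 * E p y)

lemma smooth_slope (hE : IsFinslerEnergy U E) (hp : p ∈ U) (α : Vec n → ℝ) :
    ContDiffOn ℝ (⊤ : ℕ∞) (slope E α p) {y | y ≠ 0} := by
  have hpos : ∀ y ∈ {y : Vec n | y ≠ 0}, 0 < 2 * E p y := fun y hy => by
    have := energy_pos_s13 hE hp hy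
    linarith
  refine (fderiv ℝ α p).contDiff.contDiffOn.div
    ((contDiffOn_const.mul (smooth_fibre hE hp)).sqrt fun y hy => (hpos y hy).ne') fun y hy => ?_
  exact (Real.sqrt_pos.2 (hpos y hy)).ne'

/-- `F ds = α - (y^m α_m / 2E) dE`, the lowered form of `η`. -/
lemma fderiv_slope (hE : IsFinslerEnergy U E) (hp : p ∈ U) (α : Vec n → ℝ) {y : Vec n}
    (hy : y ≠ 0) (u : Vec n) :
    fderiv ℝ (slope E α p) y u = (Real.sqrt (2 * E p y))⁻¹ *
      (fderiv ℝ α p u - fderiv ℝ α p y / (2 * E p y) * fderiv ℝ (E p) y u) := by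
  have hpos : 0 < 2 * E p y := by
    have := energy_pos_s13 hE hp hy
    linarith
  have hF := Real.sqrt_pos.2 hpos
  have h1 : HasFDerivAt (fun z => Real.sqrt (2 * E p z))
      ((1 / (2 * Real.sqrt (2 * E p y))) • ((2 : ℝ) • fderiv ℝ (E p) y)) y :=
    ((differentiableAt_of_smooth (smooth_fibre hE hp) hy).hasFDerivAt.const_mul
      (2 : ℝ)).sqrt hpos.ne'
  have h2 := hasFDerivAt_quotient ((fderiv ℝ α p).hasFDerivAt (x := y)) h1 hF.ne'
  have h3 := congrArg (fun T : Vec n →L[ℝ] ℝ => T u) h2.fderiv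
  refine Eq.trans h3 ?_
  have hsq : E p y = Real.sqrt (2 * E p y) ^ 2 / 2 := by
    rw [Real.sq_sqrt hpos.le]; ring
  simp only [sub_apply, smul_apply, smul_eq_mul]
  set r := Real.sqrt (2 * E p y) with hr
  rw [hsq]
  field_simp

/-- Linear dependence of `η` and `W` amounts, after lowering indices, to
`d(X^l α_l) ∧ ds = 0`. -/
lemma wedge_eq_zero (hE : IsFinslerEnergy U E) (hp : p ∈ U) (α : Vec n → ℝ) {y : Vec n}
    (hy : y ≠ 0)
    (hdep : ¬ LinearIndependent ℝ ![(fun l => etaUp E α l p y), (fun l => Wup E α l p y)])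
    (u z : Vec n) :
    fderiv ℝ (Xalpha E α p) y u * fderiv ℝ (slope E α p) y z
      = fderiv ℝ (Xalpha E α p) y z * fderiv ℝ (slope E α p) y u := by
  rw [LinearIndependent.pair_iff] at hdep
  push Not at hdep
  obtain ⟨a, b, hab, hne⟩ := hdep
  set T : Vec n →L[ℝ] ℝ :=
    fderiv ℝ α p - (fderiv ℝ α p y / (2 * E p y)) • fderiv ℝ (E p) y with hT
  have hrel : ∀ w, a * T w + b * fderiv ℝ (Xalpha E α p) y w = 0 := by
    have hbasis : ∀ i, a * T (Pi.single i 1)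
        + b * fderiv ℝ (Xalpha E α p) y (Pi.single i 1) = 0 := by
      intro i
      have h1 : T (Pi.single i 1) = ∑ l, gdown E i l p y * etaUp E α l p y := by
        rw [gdown_mul_eta hE hp α hy, yalpha_eq]
        rfl
      rw [h1, ← gdown_mul_W hE hp α hy, Finset.mul_sum, Finset.mul_sum,
        ← Finset.sum_add_distrib]
      refine Finset.sum_eq_zero fun l _ => ?_
      have := congrFun hab l
      simp only [Pi.add_apply, Pi.smul_apply, smul_eq_mul, Pi.zero_apply] at this
      linear_combination gdown E i l p y * this
    intro w
    rw [clm_apply_eq_sum T, clm_apply_eq_sum (fderiv ℝ (Xalpha E α p) y), Finset.mul_sum,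
      Finset.mul_sum, ← Finset.sum_add_distrib]
    refine Finset.sum_eq_zero fun i _ => ?_
    linear_combination w i * hbasis i
  have hsl : ∀ w, fderiv ℝ (slope E α p) y w = (Real.sqrt (2 * E p y))⁻¹ * T w := fun w =>
    fderiv_slope hE hp α hy w
  have hm : fderiv ℝ (Xalpha E α p) y u * T z = fderiv ℝ (Xalpha E α p) y z * T u := by
    by_cases ha : a = 0
    · have hb : b ≠ 0 := hne ha
      have h0 : ∀ w, fderiv ℝ (Xalpha E α p) y w = 0 := fun w => by
        simpa [ha, hb] using hrel w
      rw [h0, h0, zero_mul, zero_mul]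
    · apply mul_left_cancel₀ ha
      linear_combination fderiv ℝ (Xalpha E α p) y u * hrel z
        - fderiv ℝ (Xalpha E α p) y z * hrel u
  rw [hsl, hsl]
  linear_combination (Real.sqrt (2 * E p y))⁻¹ * hm

end Fibre

/-! ### Constancy on the hyperplane -/

end FinslerConformal


namespace FinslerConformal

/-- Theorem 5 of the paper. If `n ≥ 3`, the contracted conformal
invariance of the mixed Berwald curvature holds, `dα ≠ 0` at `p`, and `η` and
`W = X^sX^l_s` are linearly dependent at every nonzero `y` over `p`, then both
`v ↦ (X^lα_l)(p,v)` and `v ↦ F(p,v)·(X^l_sX^sα_l)(p,v)` are constant on the punctured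
hyperplane `{ v ≠ 0 : α_i(p)v^i = 0 }`. -/
theorem constancy_on_level_hyperplane
    {n : ℕ} (hn : 3 ≤ n) (U : Set (Vec n)) (hU : IsOpen U)
    (E : Fn n) (hE : IsFinslerEnergy U E)
    (α : Vec n → ℝ) (hα : ContDiffOn ℝ (⊤ : ℕ∞) α U)
    (p : Vec n) (hp : p ∈ U) (hdα : fderiv ℝ α p ≠ 0)
    (hinv : ∀ x ∈ U, ∀ y : Vec n, y ≠ 0 → ∀ i j k : Fin n,
      (∑ l, mixedCurv (confE E α) l i j k x y * pda α l x) =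
        ∑ l, mixedCurv E l i j k x y * pda α l x)
    (hdep : ∀ y : Vec n, y ≠ 0 →
      ¬ LinearIndependent ℝ ![(fun l => etaUp E α l p y), (fun l => Wup E α l p y)]) :
    ∀ v w : Vec n, v ≠ 0 → w ≠ 0 →
      (∑ i, pda α i p * v i) = 0 → (∑ i, pda α i p * w i) = 0 →
      Xalpha E α p v = Xalpha E α p w ∧
      Real.sqrt (2 * E p v) * (∑ l, ∑ s, XupD E α l s p v * Xup E α s p v * pda α l p) =
        Real.sqrt (2 * E p w) * (∑ l, ∑ s, XupD E α l s p w * Xup E α s p w * pda α l p) := by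
  intro v w hv hw hLv hLw
  set L := fderiv ℝ α p with hL
  obtain ⟨ξ, hξ⟩ : ∃ ξ, L ξ ≠ 0 := by
    by_contra! h
    exact hdα (ContinuousLinearMap.ext h)
  have hLsum : ∀ u : Vec n, L u = ∑ i, pda α i p * u i := fun u => by
    rw [clm_apply_eq_sum L u]
    exact Finset.sum_congr rfl fun i _ => mul_comm _ _
  rw [← hLsum] at hLv hLw
  have hF : ∀ y : Vec n, y ≠ 0 → 0 < Real.sqrt (2 * E p y) := fun y hy => by
    have := energy_pos_s13 hE hp hy
    exact Real.sqrt_pos.2 (by linarith)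
  have hds : ∀ y : Vec n, y ≠ 0 → L y = 0 → ∀ u,
      fderiv ℝ (slope E α p) y u = (Real.sqrt (2 * E p y))⁻¹ * L u := by
    intro y hy hLy u
    rw [fderiv_slope hE hp α hy, ← hL, hLy]
    simp
  have hwedge := fun (y : Vec n) (hy : y ≠ 0) => wedge_eq_zero hE hp α hy (hdep y hy)
  have hc : ∀ y : Vec n, y ≠ 0 → (Real.sqrt (2 * E p y))⁻¹ ≠ 0 := fun y hy =>
    inv_ne_zero (hF y hy).ne'
  have hA := const_of_wedge hn L (Xalpha E α p) (slope E α p) (smooth_Xalpha hE hp α) ξ hξ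
    _ hc hds hwedge hv hw hLv hLw
  have hK := const_factor_of_wedge hn L (Xalpha E α p) (slope E α p) (smooth_Xalpha hE hp α)
    (smooth_slope hE hp α) ξ hξ _ hc hds hwedge hv hw hLv hLw
  -- With `da = K ds` along the hyperplane, `F W^l α_l = F da(X) = K L(X) = K a`.
  have hval : ∀ y : Vec n, y ≠ 0 → L y = 0 →
      Real.sqrt (2 * E p y) * (∑ l, ∑ s, XupD E α l s p y * Xup E α s p y * pda α l p)
        = fderiv ℝ (Xalpha E α p) y ξ / fderiv ℝ (slope E α p) y ξ * Xalpha E α p y := by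
    intro y hy hLy
    have hX : ∑ l, ∑ s, XupD E α l s p y * Xup E α s p y * pda α l p
        = fderiv ℝ (Xalpha E α p) y (fun s => Xup E α s p y) := by
      rw [clm_apply_eq_sum, Finset.sum_comm]
      refine Finset.sum_congr rfl fun s _ => ?_
      rw [fderiv_Xalpha hE hp α hy, Finset.mul_sum]
      exact Finset.sum_congr rfl fun l _ => by ring
    have hLX : L (fun s => Xup E α s p y) = Xalpha E α p y := by
      rw [hLsum]
      exact Finset.sum_congr rfl fun l _ => mul_comm _ _
    have h := hwedge y hy (fun s => Xup E α s p y) ξ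
    have hFy := (hF y hy).ne'
    rw [hds y hy hLy, hds y hy hLy, hLX] at h
    rw [hX, hds y hy hLy]
    field_simp at h ⊢
    linear_combination h
  exact ⟨hA, by rw [hval v hv hLv, hval w hw hLw, hK, hA]⟩

end FinslerConformal
end
end
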